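/- Let r ≥ 4 and let H be an (r−2)-reducible r-tree with cross-cut number σ(H) = t+1. Fix a tree-defining ordering of H and a minimum cross-cut S of H, and let w be the last vertex of S to be included as edges of H are added in this ordering. Let H_w be the subgraph of H consisting of all edges containing w, and suppose H_w is a linear star L^r_p (a sunflower of p edges whose kernel is the single vertex w). Then there exists a positive integer n_1 such that for all n ≥ n_1, ex(n,H) ≤ binom(n,r) − binom(n−t,r) + ex(n−t, L^r_p). -/

import Mathlib

open Finset
open scoped Classical

noncomputable section

variable {α β : Type*}

/-- The vertex set of a hypergraph given by its finite edge set. -/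
def hverts [DecidableEq α] (H : Finset (Finset α)) : Finset α := H.sup id

/-- `E 0, E 1, …, E (m-1)` is a tree-defining ordering: every edge after the first
has a parent among the earlier edges containing its intersection with the union of
all earlier edges. -/
def IsTreeOrder {m : ℕ} [DecidableEq α] (E : Fin m → Finset α) : Prop :=
  ∀ i : Fin m, 0 < i.1 → ∃ j : Fin m, j < i ∧ E i ∩ (Finset.Iio i).sup E ⊆ E j

/-- A tight tree-defining ordering for an `r`-uniform hypergraph. -/
def IsTightTreeOrder {m : ℕ} [DecidableEq α] (r : ℕ) (E : Fin m → Finset α) : Prop :=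
  ∀ i : Fin m, 0 < i.1 → ∃ j : Fin m, j < i ∧ E i ∩ (Finset.Iio i).sup E ⊆ E j ∧
    (E i ∩ E j).card = r - 1

/-- `H` is an `r`-tree: its edges admit a tree-defining ordering (with multiplicities
allowed in the ordering), and all edges have `r` vertices. -/
def IsRTree [DecidableEq α] (r : ℕ) (H : Finset (Finset α)) : Prop :=
  ∃ (m : ℕ) (E : Fin m → Finset α),
    H = Finset.image E Finset.univ ∧ IsTreeOrder E ∧ ∀ i, (E i).card = r

/-- `H` is a tight `r`-tree. -/
def IsTightRTree [DecidableEq α] (r : ℕ) (H : Finset (Finset α)) : Prop :=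
  ∃ (m : ℕ) (E : Fin m → Finset α),
    H = Finset.image E Finset.univ ∧ IsTightTreeOrder r E ∧ ∀ i, (E i).card = r

/-- The degree of a vertex: the number of edges containing it. -/
def hdeg [DecidableEq α] (H : Finset (Finset α)) (x : α) : ℕ :=
  (H.filter (fun E => x ∈ E)).card

/-- `H` is `k`-reducible: every edge contains at least `k` vertices of degree 1. -/
def Reducible [DecidableEq α] (k : ℕ) (H : Finset (Finset α)) : Prop :=
  ∀ E ∈ H, k ≤ (E.filter (fun x => hdeg H x = 1)).card

/-- `S` is a cross-cut of `H`: it meets every edge in exactly one vertex. -/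
def IsCrossCut [DecidableEq α] (H : Finset (Finset α)) (S : Finset α) : Prop :=
  ∀ E ∈ H, (E ∩ S).card = 1

/-- The cross-cut number: minimum size of a cross-cut. -/
def crossCutNum [DecidableEq α] (H : Finset (Finset α)) : ℕ :=
  sInf {k | ∃ S : Finset α, IsCrossCut H S ∧ S.card = k}

/-- `S` is a vertex cover of `H`. -/
def IsVertexCover [DecidableEq α] (H : Finset (Finset α)) (S : Finset α) : Prop :=
  ∀ E ∈ H, (E ∩ S).Nonempty

/-- The vertex cover number: minimum size of a vertex cover. -/
def coverNum [DecidableEq α] (H : Finset (Finset α)) : ℕ :=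
  sInf {k | ∃ S : Finset α, IsVertexCover H S ∧ S.card = k}

/-- `G` contains a copy of `H`, i.e. `H` is embeddable in `G`. -/
def ContainsCopy [DecidableEq α] [DecidableEq β] (G : Finset (Finset β))
    (H : Finset (Finset α)) : Prop :=
  ∃ f : α → β, Set.InjOn f ↑(H.sup id) ∧ ∀ E ∈ H, E.image f ∈ G

/-- The Turán number `ex(n, H)`: the maximum size of an `r`-uniform family on `[n]`
containing no copy of `H`. -/
def exNum [DecidableEq α] (n r : ℕ) (H : Finset (Finset α)) : ℕ :=
  sSup {N | ∃ F : Finset (Finset (Fin n)), (∀ E ∈ F, E.card = r) ∧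
    ¬ContainsCopy F H ∧ F.card = N}


/-- A concrete copy of the `r`-uniform linear star `L^r_p`: a sunflower with `p` petals
whose kernel is the single vertex `0`. -/
def linearStar (r p : ℕ) : Finset (Finset ℕ) :=
  (Finset.range p).image
    (fun i => insert 0 ((Finset.range (r - 1)).image (fun j => i * (r - 1) + j + 1)))

/-!
*Full families.* A family is `K`-full if a vertex deleted from a member can always be replaced so as
to avoid any `K` given vertices. A hypertree embeds greedily into a full family of the right
uniformity, starting from any of its edges, and every family becomes full after deleting at most
`K` members per element of the shadow lost. Hence a family of `k`-sets on `n` vertices without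
nonempty full subfamilies has only `O(n ^ (k - 1))` members.

*Structure of `H`.* Let `t > 0`. Since `w` is the last vertex of the cross-cut `S`, the star at `w`
meets the other edges of `H` only inside a set `A` of at most two vertices contained in one edge of
each kind. Deleting `S` from all edges leaves a hypertree of `(r - 1)`-sets. So a full family of
`(r - 1)`-sets in the common link of `t` vertices, together with a copy of `H_w` in which the image
of `A` lies in a member of the family, yields a copy of `H`.

*Heavy vertices.* By reducibility the vertices that an edge shares with other edges lie in a pair,
and these pairs form a hypertree. Call a pair fat if it extends to edges avoiding any bounded set.
A full family of fat pairs yields a copy of `H`, so an `H`-free family `F` has only `O(n)` fat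
pairs. All but `O(n ^ (r - 2))` edges of `F` either contain two disjoint fat pairs or are spanned
by a star of fat pairs; the former are rare, and the centre of the star is usually one of boundedly
many vertices. So nearly all edges of `F` meet a bounded set of vertices.

*Stability.* To each `(r - 1)`-set attach its neighbourhood in this bounded set. By passing to full
subfamilies, few neighbourhoods have more than `t` vertices; as `F` is large, nearly all have
exactly `t`. Members with two common vertices of full families for different `t`-sets would yield a
copy of `H`, and `r - 2 ≥ 2`, so the neighbourhood does not change when one element is exchanged.
Hence nearly all neighbourhoods equal one `t`-set `L`.

*Exact bound.* Let `M` be the number of `r`-sets meeting `L` and missing from `F`. The common link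
of `L` has a full subfamily covering all but `O(M / n ^ (r - 3))` pairs outside `L`. The edges of
`F` avoiding `L` that contain a covered pair contain no linear star with `p` petals. The others are
cliques in the sparse graph of uncovered pairs and have no full subfamily, so they are at most `K`
times as many as their shadow, which has at most `M / K` members. Thus they are no more numerous
than the missing sets.
-/

/-! ### Hypertrees and their embeddings into full families -/

theorem exists_injOn_union [DecidableEq α] {V W : Finset α} {f g : α → β} (hf : Set.InjOn f V)
    (hg : Set.InjOn g W) (hfg : ∀ x ∈ V, x ∈ W → f x = g x)
    (hne : ∀ x ∈ V, x ∉ W → ∀ y ∈ W, f x ≠ g y) :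
    ∃ h : α → β, Set.EqOn h f V ∧ Set.EqOn h g W ∧ Set.InjOn h (V ∪ W : Finset α) := by
  have eqf : Set.EqOn (V.piecewise f g) f V := fun x hx => piecewise_eq_of_mem V f g hx
  have eqg : Set.EqOn (V.piecewise f g) g W := fun x hx => by
    by_cases hxV : x ∈ V
    · rw [eqf hxV, hfg x hxV hx]
    · exact piecewise_eq_of_notMem V f g hxV
  have cross : ∀ x ∈ V, ∀ y ∈ W, f x = g y → x = y := fun x hx y hy hxy => by
    by_cases hxW : x ∈ W
    · exact hg hxW hy (hfg x hx hxW ▸ hxy)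
    · exact absurd hxy (hne x hx hxW y hy)
  refine ⟨V.piecewise f g, eqf, eqg, fun x hx y hy hxy => ?_⟩
  rcases mem_union.1 hx with hx | hx <;> rcases mem_union.1 hy with hy | hy
  · exact hf hx hy (by rwa [eqf hx, eqf hy] at hxy)
  · exact cross x hx y hy (by rwa [eqf hx, eqg hy] at hxy)
  · exact (cross y hy x hx (by rwa [eqg hx, eqf hy, eq_comm] at hxy)).symm
  · exact hg hx hy (by rwa [eqg hx, eqg hy] at hxy)

theorem exists_injOn_extend_image_eq [DecidableEq β] {I E : Finset α} {D : Finset β} {g : α → β}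
    (hI : I ⊆ E) (hcard : E.card = D.card) (hg : Set.InjOn g I) (hgD : I.image g ⊆ D) :
    ∃ f : α → β, Set.EqOn f g I ∧ Set.InjOn f E ∧ E.image f = D := by
  obtain ⟨e, he⟩ := Set.MapsTo.exists_equiv_extend_of_card_eq (α := E) (t := D)
    (s := {x | (x : α) ∈ I}) (f := fun x => g x) (by simpa using hcard)
    (fun x hx => hgD (mem_image_of_mem g hx)) (fun x hx y hy hxy => Subtype.ext (hg hx hy hxy))
  let f : α → β := fun x => if hx : x ∈ E then e ⟨x, hx⟩ else g x
  have hf : ∀ x (hx : x ∈ E), f x = e ⟨x, hx⟩ := fun x hx => dif_pos hx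
  have hinj : Set.InjOn f E := fun x hx y hy hxy => by
    rw [hf x hx, hf y hy] at hxy
    exact congrArg Subtype.val (e.injective (Subtype.ext hxy))
  refine ⟨f, fun x hx => (hf x (hI hx)).trans (he ⟨x, hI hx⟩ hx), hinj, ?_⟩
  refine eq_of_subset_of_card_le (image_subset_iff.2 fun x hx => ?_)
    (by rw [card_image_of_injOn hinj, hcard])
  rw [hf x hx]
  exact (e ⟨x, hx⟩).2

theorem exists_injOn_extend_union [DecidableEq α] [DecidableEq β] {V E : Finset α} {D : Finset β}
    {f : α → β} (hf : Set.InjOn f V) (hcard : E.card = D.card) (hfD : (E ∩ V).image f ⊆ D)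
    (hnew : Disjoint (D \ (E ∩ V).image f) (V.image f)) :
    ∃ f' : α → β, Set.EqOn f' f V ∧ Set.InjOn f' (V ∪ E : Finset α) ∧ E.image f' = D := by
  obtain ⟨g, hgf, hg, hgE⟩ := exists_injOn_extend_image_eq inter_subset_left hcard
    (hf.mono (mod_cast inter_subset_right)) hfD
  obtain ⟨f', hf'f, hf'g, hf'⟩ := exists_injOn_union hf hg
    (fun x hxV hxE => (hgf (mem_inter.2 ⟨hxE, hxV⟩)).symm) fun x hxV hxE y hyE hxy => by
      refine disjoint_right.1 hnew (mem_image_of_mem f hxV)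
        (mem_sdiff.2 ⟨hxy ▸ hgE ▸ mem_image_of_mem g hyE, fun hmem => ?_⟩)
      obtain ⟨z, hz, hzx⟩ := mem_image.1 hmem
      exact hxE (hf (mem_inter.1 hz).2 hxV hzx ▸ (mem_inter.1 hz).1)
  exact ⟨f', hf'f, hf', (image_congr hf'g).trans hgE⟩

section Hypertree

variable [DecidableEq α] {T : Finset (Finset α)} {E Q R B : Finset α}

theorem mem_hverts {H : Finset (Finset α)} {x : α} : x ∈ hverts H ↔ ∃ E ∈ H, x ∈ E := by
  simp only [hverts, Finset.mem_sup, id_eq]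

theorem subset_hverts {H : Finset (Finset α)} (hB : B ∈ H) : B ⊆ hverts H :=
  fun _ hx => mem_hverts.2 ⟨B, hB, hx⟩

theorem hverts_insert (E : Finset α) (T : Finset (Finset α)) :
    hverts (insert E T) = hverts T ∪ E := by
  simp only [hverts, sup_insert, id_eq, sup_eq_union, union_comm]

theorem hverts_mono {H H' : Finset (Finset α)} (h : H ⊆ H') : hverts H ⊆ hverts H' :=
  sup_mono h

/-- `IsHypertree R T`: the family `T` is a hypertree with root `R`, that is, it is built from the
single edge `R` by adding edges one at a time, each of which meets all earlier edges inside one of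
them. The root records the edge at which an ordering starts; by `IsHypertree.reroot` any
edge can play its role. -/
inductive IsHypertree [DecidableEq α] (R : Finset α) : Finset (Finset α) → Prop
  | root : IsHypertree R {R}
  | insert_edge {T : Finset (Finset α)} {E Q : Finset α} : IsHypertree R T → Q ∈ T →
      (∀ F ∈ T, E ∩ F ⊆ Q) → IsHypertree R (insert E T)

theorem IsHypertree.root_mem (hT : IsHypertree R T) : R ∈ T := by
  induction hT with
  | root => exact mem_singleton_self R
  | insert_edge _ _ _ ih => exact mem_insert_of_mem ih

theorem IsHypertree.insert_root (hT : IsHypertree Q T) (hE : ∀ F ∈ T, E ∩ F ⊆ Q) :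
    IsHypertree E (insert E T) := by
  induction hT with
  | root =>
    rw [pair_comm]
    exact .insert_edge .root (mem_singleton_self E) (by simp)
  | @insert_edge T F P hT hP hF ih =>
    rw [insert_comm]
    refine .insert_edge (ih fun F hF => hE F (mem_insert_of_mem hF)) (mem_insert_of_mem hP) ?_
    simp only [mem_insert, forall_eq_or_imp]
    refine ⟨fun x hx => ?_, hF⟩
    obtain ⟨hxF, hxE⟩ := mem_inter.1 hx
    have hxQ : x ∈ Q := hE F (mem_insert_self F T) (mem_inter.2 ⟨hxE, hxF⟩)
    exact hF Q hT.root_mem (mem_inter.2 ⟨hxF, hxQ⟩)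

theorem IsHypertree.reroot (hT : IsHypertree R T) (hB : B ∈ T) : IsHypertree B T := by
  induction hT generalizing B with
  | root => exact mem_singleton.1 hB ▸ .root
  | insert_edge _ hQ hE ih =>
    rcases mem_insert.1 hB with rfl | hB
    · exact (ih hQ).insert_root hE
    · exact .insert_edge (ih hB) hQ hE

/-- Here `φ` shrinks the edges without losing intersections. -/
theorem IsHypertree.image {φ : Finset α → Finset α} (hT : IsHypertree R T)
    (hφ : ∀ E ∈ T, φ E ⊆ E)
    (hφ' : ∀ E ∈ T, ∀ F ∈ T, ∀ Q ∈ T, φ E ∩ φ F ⊆ Q → φ E ∩ φ F ⊆ φ Q) :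
    IsHypertree (φ R) (T.image φ) := by
  induction hT with
  | root => exact .root
  | @insert_edge T E Q _ hQ hE ih =>
    rw [image_insert]
    have hmem : ∀ F ∈ T, F ∈ insert E T := fun F => mem_insert_of_mem
    refine .insert_edge (ih (fun F hF => hφ F (hmem F hF)) fun F hF P hP Q' hQ' =>
      hφ' F (hmem F hF) P (hmem P hP) Q' (hmem Q' hQ')) (mem_image_of_mem φ hQ) ?_
    simp only [mem_image, forall_exists_index, and_imp, forall_apply_eq_imp_iff₂]
    intro F hF
    refine hφ' E (mem_insert_self E T) F (hmem F hF) Q (hmem Q hQ) ?_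
    exact (inter_subset_inter (hφ E (mem_insert_self E T)) (hφ F (hmem F hF))).trans (hE F hF)

end Hypertree

section Full

variable [DecidableEq α] [DecidableEq β] {K k : ℕ} {G : Finset (Finset β)}

/-- A family is `K`-full if every set obtained by deleting a vertex from a member can be completed
to a member again while avoiding any prescribed set of at most `K` vertices. -/
def Full (K : ℕ) (G : Finset (Finset β)) : Prop :=
  ∀ D ∈ G, ∀ x ∈ D, ∀ X : Finset β, X.card ≤ K →
    ∃ y, y ∉ X ∧ y ∉ D.erase x ∧ insert y (D.erase x) ∈ G

theorem Full.exists_superset_avoiding (hG : Full K G) {I X D : Finset β} (hX : X.card ≤ K)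
    (hD : D ∈ G) (hI : I ⊆ D) :
    ∃ D' ∈ G, I ⊆ D' ∧ D'.card = D.card ∧ ∀ y ∈ D', y ∉ I → y ∉ X := by
  induction hc : ((D \ I) ∩ X).card generalizing D with
  | zero =>
    refine ⟨D, hD, hI, rfl, fun y hy hyI hyX => ?_⟩
    exact notMem_empty y
      (card_eq_zero.1 hc ▸ mem_inter.2 ⟨mem_sdiff.2 ⟨hy, hyI⟩, hyX⟩)
  | succ c ih =>
    obtain ⟨x, hx⟩ : ((D \ I) ∩ X).Nonempty := card_pos.1 (by omega)
    obtain ⟨hxD, hxI⟩ := mem_sdiff.1 (mem_inter.1 hx).1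
    obtain ⟨y, hyX, hyD, hyG⟩ := hG D hD x hxD X hX
    have hremaining : (insert y (D.erase x) \ I) ∩ X = ((D \ I) ∩ X).erase x := by grind
    have hI' : I ⊆ insert y (D.erase x) := fun z hz =>
      mem_insert_of_mem (mem_erase.2 ⟨fun hzx => hxI (hzx ▸ hz), hI hz⟩)
    obtain ⟨D', hD', hID', hcard, havoid⟩ := ih hyG hI' (by
      rw [hremaining, card_erase_of_mem hx, hc, Nat.add_sub_cancel])
    refine ⟨D', hD', hID', ?_, havoid⟩
    rw [hcard, card_insert_of_notMem hyD, card_erase_add_one hxD]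

theorem Full.exists_extend_edge (hG : Full K G) {f : α → β} {V E Q : Finset α} {X : Finset β}
    (hf : Set.InjOn f V) (hQ : Q ⊆ V) (hEV : E ∩ V ⊆ Q) (hcard : E.card = Q.card)
    (hQG : Q.image f ∈ G) (hK : X.card + V.card ≤ K) :
    ∃ f' : α → β, Set.EqOn f' f V ∧ Set.InjOn f' (V ∪ E : Finset α) ∧ E.image f' ∈ G ∧
      ∀ x ∈ E, x ∉ V → f' x ∉ X := by
  have hX : (X ∪ V.image f).card ≤ K :=
    (card_union_le _ _).trans ((Nat.add_le_add_left card_image_le _).trans hK)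
  obtain ⟨D, hD, hsub, hDcard, havoid⟩ :=
    hG.exists_superset_avoiding hX hQG (image_subset_image hEV)
  obtain ⟨f', hf'f, hf', hf'E⟩ := exists_injOn_extend_union (E := E) hf
    (by rw [hDcard, card_image_of_injOn (hf.mono (mod_cast hQ)), hcard]) hsub
    (disjoint_left.2 fun y hy =>
      (notMem_union.1 (havoid y (mem_sdiff.1 hy).1 (mem_sdiff.1 hy).2)).2)
  refine ⟨f', hf'f, hf', hf'E ▸ hD, fun x hx hxV => ?_⟩
  refine (notMem_union.1 (havoid _ (hf'E ▸ mem_image_of_mem f' hx) fun hmem => hxV ?_)).1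
  obtain ⟨z, hz, hzx⟩ := mem_image.1 hmem
  have hzV := (mem_inter.1 hz).2
  exact hf' (mem_union_left E hzV) (mem_union_right V hx) ((hf'f hzV).trans hzx) ▸ hzV

theorem Full.exists_embedding_of_root (hG : Full K G) {R : Finset α} {T : Finset (Finset α)}
    (hT : IsHypertree R T) (hk : (T : Set (Finset α)).Sized k) {g : α → β} {X : Finset β}
    (hg : Set.InjOn g R) (hgR : R.image g ∈ G) (hK : X.card + (hverts T).card ≤ K) :
    ∃ f : α → β, Set.InjOn f (hverts T) ∧ Set.EqOn f g R ∧ (∀ B ∈ T, B.image f ∈ G) ∧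
      ∀ x ∈ hverts T, x ∉ R → f x ∉ X := by
  induction hT with
  | root =>
    have hverts_root : hverts {R} = R := sup_singleton
    rw [hverts_root]
    exact ⟨g, hg, Set.eqOn_refl g R, by simpa using hgR, fun x hx hxR => absurd hx hxR⟩
  | @insert_edge T E Q hT hQ hE ih =>
    have hsub : hverts T ⊆ hverts (insert E T) := hverts_mono (subset_insert E T)
    have hKT : X.card + (hverts T).card ≤ K := by
      have := card_le_card hsub
      omega
    obtain ⟨f, hf, hfg, hfG, hfX⟩ := ih (fun B hB => hk (mem_insert_of_mem hB)) hKT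
    have hEV : E ∩ hverts T ⊆ Q := fun x hx => by
      obtain ⟨hxE, hxT⟩ := mem_inter.1 hx
      obtain ⟨F, hF, hxF⟩ := mem_hverts.1 hxT
      exact hE F hF (mem_inter.2 ⟨hxE, hxF⟩)
    obtain ⟨f', hf'f, hf', hf'E, hf'X⟩ := hG.exists_extend_edge (E := E) hf (subset_hverts hQ) hEV
      ((hk (mem_insert_self E T)).trans (hk (mem_insert_of_mem hQ)).symm) (hfG Q hQ) hKT
    rw [hverts_insert]
    refine ⟨f', hf', fun x hx => (hf'f (subset_hverts hT.root_mem hx)).trans (hfg hx), ?_, ?_⟩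
    · simp only [mem_insert, forall_eq_or_imp]
      exact ⟨hf'E, fun B hB => image_congr (fun x hx => hf'f (subset_hverts hB hx)) ▸ hfG B hB⟩
    · intro x hx hxR
      by_cases hxT : x ∈ hverts T
      · exact hf'f hxT ▸ hfX x hxT hxR
      · exact hf'X x ((mem_union.1 hx).resolve_left hxT) hxT

theorem Full.exists_embedding (hG : Full K G) {R A : Finset α} {T : Finset (Finset α)}
    (hT : IsHypertree R T) (hk : (T : Set (Finset α)).Sized k) (hA : A ⊆ R) {g : α → β}
    {D X : Finset β} (hg : Set.InjOn g A) (hD : D ∈ G) (hDk : D.card = k)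
    (hgD : A.image g ⊆ D) (hK : X.card + (hverts T).card ≤ K) :
    ∃ f : α → β, Set.InjOn f (hverts T) ∧ Set.EqOn f g A ∧ (∀ B ∈ T, B.image f ∈ G) ∧
      ∀ x ∈ hverts T, x ∉ A → f x ∉ X := by
  obtain ⟨D', hD', hsub, hcard, havoid⟩ := hG.exists_superset_avoiding (X := X) (by omega) hD hgD
  obtain ⟨g', hg'g, hg', himage⟩ :=
    exists_injOn_extend_image_eq hA (by rw [hk hT.root_mem, hcard, hDk]) hg hsub
  obtain ⟨f, hf, hfg, hfG, hfX⟩ := hG.exists_embedding_of_root hT hk hg' (himage ▸ hD') hK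
  refine ⟨f, hf, fun x hx => (hfg (hA hx)).trans (hg'g hx), hfG, fun x hx hxA => ?_⟩
  by_cases hxR : x ∈ R
  · rw [hfg hxR]
    refine havoid _ (himage ▸ mem_image_of_mem g' hxR) fun hmem => ?_
    obtain ⟨z, hz, hzx⟩ := mem_image.1 hmem
    exact hxA (hg' (hA hz) hxR ((hg'g hz).trans hzx) ▸ hz)
  · exact hfX x hx hxR

theorem exists_card_fiber_le_of_not_full (hG : ¬Full K G) :
    ∃ Q ∈ G.shadow, (G.filter fun D => ∃ y ∉ Q, insert y Q = D).card ≤ K := by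
  unfold Full at hG
  push Not at hG
  obtain ⟨D, hD, x, hx, X, hX, hno⟩ := hG
  refine ⟨D.erase x, mem_shadow_iff.2 ⟨D, hD, x, hx, rfl⟩, le_trans (card_le_card ?_)
    (card_image_le.trans hX : (X.image fun y => insert y (D.erase x)).card ≤ K)⟩
  intro D' hD'
  obtain ⟨hD'G, y, hyQ, rfl⟩ := mem_filter.1 hD'
  by_contra hmem
  exact hno y (fun hyX => hmem (mem_image_of_mem _ hyX)) hyQ hD'G

/-- As long as some element of the shadow lies in at most `K` members, delete these. -/
theorem exists_full_subfamily (K : ℕ) (G : Finset (Finset β)) :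
    ∃ G' ⊆ G, Full K G' ∧ (G \ G').card ≤ K * (G.shadow \ G'.shadow).card := by
  induction G using Finset.strongInduction with
  | H G ih =>
    by_cases hfull : Full K G
    · exact ⟨G, subset_rfl, hfull, by simp⟩
    obtain ⟨Q, hQ, hfiber⟩ := exists_card_fiber_le_of_not_full hfull
    set G₁ := G.filter fun D => ¬∃ y ∉ Q, insert y Q = D
    have hG₁ : G₁ ⊆ G := filter_subset _ _
    have hQG₁ : Q ∉ G₁.shadow := fun hmem => by
      obtain ⟨y, hyQ, hyG₁⟩ := mem_shadow_iff_insert_mem.1 hmem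
      exact (mem_filter.1 hyG₁).2 ⟨y, hyQ, rfl⟩
    have hssub : G₁ ⊂ G := hG₁.ssubset_of_ne fun h => hQG₁ (h ▸ hQ)
    obtain ⟨G', hG', hfull', hcard⟩ := ih G₁ hssub
    refine ⟨G', hG'.trans hG₁, hfull', ?_⟩
    have hlost : (G \ G').card ≤ K + (G₁ \ G').card := by
      have hunion : G \ G' ⊆ (G.filter fun D => ∃ y ∉ Q, insert y Q = D) ∪ (G₁ \ G') := by
        grind
      exact (card_le_card hunion).trans
        ((card_union_le _ _).trans (Nat.add_le_add_right hfiber _))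
    have hshadow : (G₁.shadow \ G'.shadow).card + 1 ≤ (G.shadow \ G'.shadow).card := by
      rw [← card_insert_of_notMem (a := Q) fun h => hQG₁ (mem_sdiff.1 h).1]
      exact card_le_card (insert_subset
        (mem_sdiff.2 ⟨hQ, fun h => hQG₁ (shadow_mono hG' h)⟩)
        (sdiff_subset_sdiff (shadow_mono hG₁) subset_rfl))
    calc (G \ G').card ≤ K + K * (G₁.shadow \ G'.shadow).card := by omega
      _ = K * ((G₁.shadow \ G'.shadow).card + 1) := by ring
      _ ≤ K * (G.shadow \ G'.shadow).card := Nat.mul_le_mul_left K hshadow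

end Full

/-! ### Cross-cuts, common links and gluing -/

section CrossCut

variable [DecidableEq α] [DecidableEq β] {r K : ℕ} {T : Finset (Finset α)} {R S A : Finset α}
  {F G : Finset (Finset β)} {L X D : Finset β}

theorem IsCrossCut.eq_of_mem (hS : IsCrossCut T S) {B : Finset α} (hB : B ∈ T) {x y : α}
    (hx : x ∈ B) (hxS : x ∈ S) (hy : y ∈ B) (hyS : y ∈ S) : x = y :=
  card_le_one.1 (hS B hB).le x (mem_inter.2 ⟨hx, hxS⟩) y (mem_inter.2 ⟨hy, hyS⟩)

theorem IsCrossCut.card_sdiff (hS : IsCrossCut T S) {B : Finset α} (hB : B ∈ T) :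
    (B \ S).card = B.card - 1 := by
  rw [Finset.card_sdiff, inter_comm, hS B hB]

theorem IsCrossCut.insert_sdiff_eq (hS : IsCrossCut T S) {B : Finset α} (hB : B ∈ T) {u : α}
    (hu : u ∈ B) (huS : u ∈ S) : insert u (B \ S) = B := by
  ext x
  have := fun hx hxS => hS.eq_of_mem hB (x := x) hx hxS hu huS
  grind

theorem IsHypertree.image_sdiff (hT : IsHypertree R T) (S : Finset α) :
    IsHypertree (R \ S) (T.image (· \ S)) := by
  refine hT.image (fun E _ => sdiff_subset) fun E _ F _ Q _ hQ x hx => ?_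
  exact mem_sdiff.2 ⟨hQ hx, (mem_sdiff.1 (mem_inter.1 hx).1).2⟩

theorem hverts_image_sdiff (T : Finset (Finset α)) (S : Finset α) :
    hverts (T.image (· \ S)) = hverts T \ S := by
  ext x
  simp only [mem_hverts, mem_image, mem_sdiff]
  grind

/-- `CommonLink F L G`: every member of `G` lies in the link, in the hypergraph `F`, of every
vertex of `L`. -/
def CommonLink (F : Finset (Finset β)) (L : Finset β) (G : Finset (Finset β)) : Prop :=
  ∀ D ∈ G, ∀ v ∈ L, v ∉ D ∧ insert v D ∈ F

/-- The part of a hypertree away from a cross-cut is embedded into a full family of common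
links of `L`; the cross-cut vertices in `S'` can then be sent to `L`, completing the edges through
them to edges of `F`. -/
theorem Full.exists_apex_embedding (hG : Full K G) (hGr : (G : Set (Finset β)).Sized (r - 1))
    (hT : IsHypertree R T) (hTr : (T : Set (Finset α)).Sized r) (hS : IsCrossCut T S)
    {S' : Finset α} (hS' : S' ⊆ S) (hL : S'.card = L.card) (hGL : CommonLink F L G)
    (hA : A ⊆ R \ S) {g : α → β} (hg : Set.InjOn g A) (hD : D ∈ G) (hgD : A.image g ⊆ D)
    (hK : X.card + L.card + (hverts T).card ≤ K) :
    ∃ f : α → β, Set.InjOn f (hverts T \ S ∪ S' : Finset α) ∧ Set.EqOn f g A ∧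
      (∀ x ∈ S', f x ∈ L) ∧ (∀ B ∈ T, ∀ v ∈ B, v ∈ S' → B.image f ∈ F) ∧
      ∀ x ∈ hverts T, x ∉ S → x ∉ A → f x ∉ X := by
  have hsized : (T.image (· \ S) : Set (Finset α)).Sized (r - 1) := fun B hB => by
    obtain ⟨B, hBT, rfl⟩ := mem_image.1 hB
    rw [hS.card_sdiff hBT, hTr hBT]
  have hverts_le : (hverts (T.image (· \ S))).card ≤ (hverts T).card :=
    card_le_card (hverts_image_sdiff T S ▸ sdiff_subset)
  obtain ⟨f₀, hf₀, hf₀g, hf₀G, hf₀X⟩ := hG.exists_embedding (hT.image_sdiff S) hsized hA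
    (X := X ∪ L) hg hD (hGr hD) hgD (by have := card_union_le X L; omega)
  rw [hverts_image_sdiff] at hf₀ hf₀X
  obtain ⟨s, -, hs, hsL⟩ := exists_injOn_extend_image_eq (empty_subset S') hL (g := g)
    (by simp) (by simp)
  have hsL' : ∀ x ∈ S', s x ∈ L := fun x hx => hsL ▸ mem_image_of_mem s hx
  have hf₀L : ∀ x ∈ hverts T \ S, f₀ x ∉ L := fun x hx hxL => by
    by_cases hxA : x ∈ A
    · exact (hGL D hD _ hxL).1 (hf₀g hxA ▸ hgD (mem_image_of_mem g hxA))
    · exact hf₀X x hx hxA (mem_union_right X hxL)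
  obtain ⟨f, hff₀, hfs, hf⟩ := exists_injOn_union hf₀ hs
    (fun x hx hxS' => absurd (hS' hxS') (mem_sdiff.1 hx).2)
    (fun x hx _ y hy hxy => hf₀L x hx (hxy ▸ hsL' y hy))
  have hAV : A ⊆ hverts T \ S :=
    hA.trans (sdiff_subset_sdiff (subset_hverts hT.root_mem) subset_rfl)
  refine ⟨f, hf, fun x hx => (hff₀ (hAV hx)).trans (hf₀g hx), fun x hx => hfs hx ▸ hsL' x hx,
    fun B hB v hvB hvS' => ?_, fun x hxT hxS hxA hxX => ?_⟩
  · rw [← hS.insert_sdiff_eq hB hvB (hS' hvS'), image_insert, hfs hvS', image_congr fun x hx =>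
      hff₀ (sdiff_subset_sdiff (subset_hverts hB) subset_rfl hx)]
    exact (hGL _ (hf₀G _ (mem_image_of_mem _ hB)) _ (hsL' v hvS')).2
  · have hx := mem_sdiff.2 ⟨hxT, hxS⟩
    exact hf₀X x hx hxA (mem_union_left L (hff₀ hx ▸ hxX))

theorem Full.containsCopy (hG : Full K G) (hT : IsHypertree R T)
    (hTr : (T : Set (Finset α)).Sized r) (hr : 0 < r) (hD : D ∈ G) (hDr : D.card = r)
    (hK : (hverts T).card ≤ K) : ContainsCopy G T := by
  obtain ⟨y, -⟩ : D.Nonempty := card_pos.1 (hDr ▸ hr)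
  obtain ⟨f, hf, -, hfG, -⟩ := hG.exists_embedding (X := ∅) hT hTr (empty_subset R)
    (g := fun _ => y) (by simp) hD hDr (by simp) (by simpa using hK)
  exact ⟨f, hf, hfG⟩

theorem containsCopy_of_commonLink (hG : Full K G) (hGr : (G : Set (Finset β)).Sized (r - 1))
    (hT : IsHypertree R T) (hTr : (T : Set (Finset α)).Sized r) (hS : IsCrossCut T S)
    (hL : S.card = L.card) (hGL : CommonLink F L G) (hne : G.Nonempty)
    (hK : L.card + (hverts T).card ≤ K) : ContainsCopy F T := by
  obtain ⟨D, hD⟩ := hne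
  obtain ⟨y, -⟩ : L.Nonempty := card_pos.1 <| hL ▸
    (hS R hT.root_mem).symm.trans_le (card_le_card inter_subset_right)
  obtain ⟨f, hf, -, -, hfF, -⟩ := hG.exists_apex_embedding (X := ∅) hGr hT hTr hS subset_rfl hL hGL
    (empty_subset _) (g := fun _ => y) (by simp) hD (by simp) (by simpa using hK)
  refine ⟨f, hf.mono fun x hx => ?_, fun B hB => ?_⟩
  · rw [mem_coe, sdiff_union_self_eq_union]
    exact mem_union_left S hx
  · obtain ⟨v, hv⟩ := card_pos.1 (hS B hB).ge
    exact hfF B hB v (mem_inter.1 hv).1 (mem_inter.1 hv).2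

end CrossCut

section StarAttachment

variable [DecidableEq α] [DecidableEq β] {r t K : ℕ} {H : Finset (Finset α)} {S A : Finset α}
  {w : α} {F G G₁ G₂ : Finset (Finset β)} {L L₁ L₂ D D₁ D₂ : Finset β}

/-- `StarAttachment r t H S A w`: the `r`-uniform hypertree `H` has a cross-cut `S` of size `t + 1`
containing `w`, and the edges through `w` form a linear star attached to the remaining edges along
the set `A`, which lies both in an edge through `w` and in an edge avoiding `w`. -/
structure StarAttachment (r t : ℕ) (H : Finset (Finset α)) (S A : Finset α) (w : α) : Prop where
  four_le : 4 ≤ r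
  hypertree : ∀ B ∈ H, IsHypertree B H
  sized : (H : Set (Finset α)).Sized r
  reducible : Reducible (r - 2) H
  crossCut : IsCrossCut H S
  card_crossCut : S.card = t + 1
  mem_crossCut : w ∈ S
  exists_mem : ∃ B ∈ H, w ∈ B ∧ A ⊆ B
  exists_notMem : ∃ C ∈ H, w ∉ C ∧ A ⊆ C
  card_le_two : A.card ≤ 2
  card_le_one : 2 ≤ hdeg H w → A.card ≤ 1
  attach : ∀ B ∈ H, ∀ C ∈ H, w ∈ B → w ∉ C → B ∩ C ⊆ A
  star : ∀ B ∈ H, ∀ C ∈ H, w ∈ B → w ∈ C → B ≠ C → B ∩ C = {w}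

namespace StarAttachment

theorem notMem_crossCut (h : StarAttachment r t H S A w) {x : α} (hx : x ∈ A) : x ∉ S := by
  intro hxS
  obtain ⟨B, hB, hwB, hAB⟩ := h.exists_mem
  obtain ⟨C, -, hwC, hAC⟩ := h.exists_notMem
  exact hwC (h.crossCut.eq_of_mem hB (hAB hx) hxS hwB h.mem_crossCut ▸ hAC hx)

theorem subset_sdiff_crossCut (h : StarAttachment r t H S A w) {B : Finset α} (hAB : A ⊆ B) :
    A ⊆ B \ S :=
  fun _ hx => mem_sdiff.2 ⟨hAB hx, h.notMem_crossCut hx⟩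

theorem eq_of_mem_star (h : StarAttachment r t H S A w) {x : α}
    (hx : x ∈ hverts (H.filter (w ∈ ·))) (hxS : x ∈ S) : x = w := by
  obtain ⟨B, hB, hxB⟩ := mem_hverts.1 hx
  obtain ⟨hBH, hwB⟩ := mem_filter.1 hB
  exact h.crossCut.eq_of_mem hBH hxB hxS hwB h.mem_crossCut

theorem mem_attachment (h : StarAttachment r t H S A w) {x : α}
    (hx : x ∈ hverts (H.filter (w ∈ ·))) (hx' : x ∈ hverts (H.filter (w ∉ ·))) : x ∈ A := by
  obtain ⟨B, hB, hxB⟩ := mem_hverts.1 hx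
  obtain ⟨C, hC, hxC⟩ := mem_hverts.1 hx'
  rw [mem_filter] at hB hC
  exact h.attach B hB.1 C hC.1 hB.2 hC.2 (mem_inter.2 ⟨hxB, hxC⟩)

theorem exists_embedding_off_star (h : StarAttachment r t H S A w) (hG : Full K G)
    (hGr : (G : Set (Finset β)).Sized (r - 1)) (hL : L.card = t) (hGL : CommonLink F L G)
    {X : Finset β} (hXL : Disjoint X L) (hK : X.card + t + (hverts H).card ≤ K) {g : α → β}
    (hg : Set.InjOn g A) (hD : D ∈ G) (hgD : A.image g ⊆ D) :
    ∃ f : α → β, Set.InjOn f (hverts (H.filter (w ∉ ·))) ∧ Set.EqOn f g A ∧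
      (∀ B ∈ H, w ∉ B → B.image f ∈ F) ∧ ∀ x ∈ hverts (H.filter (w ∉ ·)), x ∉ A → f x ∉ X := by
  obtain ⟨C₀, hC₀, -, hAC₀⟩ := h.exists_notMem
  obtain ⟨f, hf, hfg, hfL, hfF, hfX⟩ := hG.exists_apex_embedding (X := X) hGr
    (h.hypertree C₀ hC₀) h.sized h.crossCut (erase_subset w S)
    (by rw [card_erase_of_mem h.mem_crossCut, h.card_crossCut, hL, Nat.add_sub_cancel]) hGL
    (h.subset_sdiff_crossCut hAC₀) hg hD hgD (by omega)
  have hverts_off : ∀ x ∈ hverts (H.filter (w ∉ ·)), x ∈ hverts H ∧ x ≠ w := fun x hx => by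
    refine ⟨hverts_mono (filter_subset _ _) hx, ?_⟩
    obtain ⟨C, hC, hxC⟩ := mem_hverts.1 hx
    exact ne_of_mem_of_not_mem hxC (mem_filter.1 hC).2
  refine ⟨f, hf.mono fun x hx => ?_, hfg, fun B hB hwB => ?_, fun x hx hxA => ?_⟩
  · have := hverts_off x hx
    simp only [mem_coe]
    grind
  · obtain ⟨u, hu⟩ := card_pos.1 (h.crossCut B hB).ge
    obtain ⟨huB, huS⟩ := mem_inter.1 hu
    exact hfF B hB u huB (mem_erase.2 ⟨ne_of_mem_of_not_mem huB hwB, huS⟩)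
  · by_cases hxS : x ∈ S
    · exact disjoint_right.1 hXL (hfL x (mem_erase.2 ⟨(hverts_off x hx).2, hxS⟩))
    · exact hfX x (hverts_off x hx).1 hxS hxA

theorem containsCopy_of_star (h : StarAttachment r t H S A w) (hG : Full K G)
    (hGr : (G : Set (Finset β)).Sized (r - 1)) (hL : L.card = t) (hGL : CommonLink F L G)
    (hK : t + 2 * (hverts H).card ≤ K) {g : α → β}
    (hg : Set.InjOn g (hverts (H.filter (w ∈ ·)))) (hgF : ∀ B ∈ H, w ∈ B → B.image g ∈ F)
    (hgL : ∀ x ∈ hverts (H.filter (w ∈ ·)), g x ∉ L) (hD : D ∈ G) (hgD : A.image g ⊆ D) :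
    ContainsCopy F H := by
  obtain ⟨B₀, hB₀, hwB₀, hAB₀⟩ := h.exists_mem
  set W := hverts (H.filter (w ∈ ·))
  set V := hverts (H.filter (w ∉ ·))
  have hBW : ∀ B ∈ H, w ∈ B → B ⊆ W := fun B hB hwB => subset_hverts (mem_filter.2 ⟨hB, hwB⟩)
  have hBV : ∀ B ∈ H, w ∉ B → B ⊆ V := fun B hB hwB => subset_hverts (mem_filter.2 ⟨hB, hwB⟩)
  have hAW : A ⊆ W := hAB₀.trans (hBW B₀ hB₀ hwB₀)
  have hX : (W.image g).card ≤ (hverts H).card :=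
    card_image_le.trans (card_le_card (hverts_mono (filter_subset _ _)))
  have hXL : Disjoint (W.image g) L := disjoint_left.2 fun y hy => by
    obtain ⟨x, hx, rfl⟩ := mem_image.1 hy
    exact hgL x hx
  obtain ⟨f, hf, hfg, hfF, hfX⟩ := h.exists_embedding_off_star hG hGr hL hGL hXL (by omega)
    (hg.mono (mod_cast hAW)) hD hgD
  obtain ⟨φ, hφf, hφg, hφ⟩ := exists_injOn_union hf hg
    (fun x hxV hxW => hfg (h.mem_attachment hxW hxV)) fun x hxV hxW y hy hxy =>
      hfX x hxV (fun hxA => hxW (hAW hxA)) (hxy ▸ mem_image_of_mem g hy)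
  refine ⟨φ, hφ.mono fun x hx => ?_, fun B hB => ?_⟩
  · obtain ⟨B, hB, hxB⟩ := mem_hverts.1 hx
    by_cases hwB : w ∈ B
    · exact mem_union_right V (hBW B hB hwB hxB)
    · exact mem_union_left W (hBV B hB hwB hxB)
  · by_cases hwB : w ∈ B
    · exact image_congr (hφg.mono (hBW B hB hwB)) ▸ hgF B hB hwB
    · exact image_congr (hφf.mono (hBV B hB hwB)) ▸ hfF B hB hwB

/-- The star at `w` is embedded using a vertex of `L₂ \ L₁`, the rest of `H` using `L₁`. -/
theorem containsCopy_of_two_commonLinks (h : StarAttachment r t H S A w)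
    (hG₁ : Full K G₁) (hGr₁ : (G₁ : Set (Finset β)).Sized (r - 1)) (hL₁ : L₁.card = t)
    (hGL₁ : CommonLink F L₁ G₁) (hG₂ : Full K G₂) (hGr₂ : (G₂ : Set (Finset β)).Sized (r - 1))
    (hL₂ : L₂.card = t) (hGL₂ : CommonLink F L₂ G₂) (hne : L₁ ≠ L₂) (hD₁ : D₁ ∈ G₁)
    (hD₂ : D₂ ∈ G₂) (hD : 2 ≤ (D₁ ∩ D₂).card) (hK : t + 2 * (hverts H).card ≤ K) :
    ContainsCopy F H := by
  obtain ⟨B₀, hB₀, hwB₀, hAB₀⟩ := h.exists_mem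
  obtain ⟨v, hv⟩ : (L₂ \ L₁).Nonempty := sdiff_nonempty.2 fun hsub =>
    hne (eq_of_subset_of_card_le hsub (by omega)).symm
  obtain ⟨hvL₂, hvL₁⟩ := mem_sdiff.1 hv
  obtain ⟨Q, hQ, hQcard⟩ := exists_subset_card_eq (h.card_le_two.trans hD)
  obtain ⟨g, -, hg, hgQ⟩ := exists_injOn_extend_image_eq (empty_subset A) hQcard.symm
    (g := fun _ => v) (by simp) (by simp)
  have hverts_pos : 0 < (hverts H).card := card_pos.2 ⟨w, mem_hverts.2 ⟨B₀, hB₀, hwB₀⟩⟩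
  obtain ⟨f, hf, hfg, hfv, hfF, hfL₁⟩ := hG₂.exists_apex_embedding (X := L₁) hGr₂
    (h.hypertree B₀ hB₀) h.sized h.crossCut (singleton_subset_iff.2 h.mem_crossCut)
    (by simp only [card_singleton] : _ = ({v} : Finset β).card)
    (fun D hD y hy => mem_singleton.1 hy ▸ hGL₂ D hD v hvL₂) (h.subset_sdiff_crossCut hAB₀) hg hD₂
    (hgQ ▸ hQ.trans inter_subset_right) (by rw [card_singleton]; omega)
  have hfA : A.image f ⊆ D₁ := image_congr hfg ▸ hgQ ▸ hQ.trans inter_subset_left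
  refine h.containsCopy_of_star hG₁ hGr₁ hL₁ hGL₁ hK (hf.mono fun x hx => ?_)
    (fun B hB hwB => hfF B hB w hwB (mem_singleton_self w)) (fun x hx hxL₁ => ?_) hD₁ hfA
  · have hxw := h.eq_of_mem_star hx
    have hxH : x ∈ hverts H := hverts_mono (filter_subset _ _) hx
    simp only [mem_coe]
    grind
  · by_cases hxA : x ∈ A
    · exact (hGL₁ D₁ hD₁ _ hxL₁).1 (hfA (mem_image_of_mem f hxA))
    by_cases hxS : x ∈ S
    · have hfx := hfv x (mem_singleton.2 (h.eq_of_mem_star hx hxS))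
      exact hvL₁ (mem_singleton.1 hfx ▸ hxL₁)
    · exact hfL₁ x (hverts_mono (filter_subset _ _) hx) hxS hxA hxL₁

end StarAttachment

end StarAttachment

/-! ### Counting with shadows and degrees -/

section Counting

theorem Full.card_le_mul_card_shadow [DecidableEq β] {K : ℕ} {G : Finset (Finset β)}
    (hG : ∀ G' ⊆ G, Full K G' → G' = ∅) : G.card ≤ K * G.shadow.card := by
  obtain ⟨G', hG', hfull, hcard⟩ := exists_full_subfamily K G
  obtain rfl := hG G' hG' hfull
  simpa using hcard

variable {Γ : Finset (Finset β)} {k n q : ℕ}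

theorem card_le_pow_of_sized [Fintype β] {G : Finset (Finset β)}
    (hG : (G : Set (Finset β)).Sized k) : G.card ≤ Fintype.card β ^ k :=
  hG.card_le.trans (Nat.choose_le_pow _ _)

theorem card_powersetCard_univ_le_pow [Fintype β] (k : ℕ) :
    (powersetCard k (univ : Finset β)).card ≤ Fintype.card β ^ k :=
  card_le_pow_of_sized (Set.sized_powersetCard univ k)

theorem sum_hdeg [Fintype β] [DecidableEq β] (hΓ : (Γ : Set (Finset β)).Sized k) :
    ∑ x, hdeg Γ x = k * Γ.card := by
  calc ∑ x, hdeg Γ x = ∑ P ∈ Γ, (univ.filter (· ∈ P)).card :=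
        sum_card_bipartiteAbove_eq_sum_card_bipartiteBelow (s := univ) (t := Γ) (· ∈ ·)
    _ = ∑ _ ∈ Γ, k := sum_congr rfl fun _ hP => by rw [filter_mem_eq_inter, univ_inter, hΓ hP]
    _ = k * Γ.card := by rw [sum_const, smul_eq_mul, mul_comm]

theorem card_heavy_mul_le [Fintype β] [DecidableEq β] (hΓ : (Γ : Set (Finset β)).Sized k)
    (n q : ℕ) : (univ.filter fun x => n ≤ q * hdeg Γ x).card * n ≤ k * q * Γ.card := by
  calc (univ.filter fun x => n ≤ q * hdeg Γ x).card * n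
      = ∑ _ ∈ univ.filter fun x => n ≤ q * hdeg Γ x, n := by rw [sum_const, smul_eq_mul]
    _ ≤ ∑ x ∈ univ.filter fun x => n ≤ q * hdeg Γ x, q * hdeg Γ x :=
        sum_le_sum fun _ hx => (mem_filter.1 hx).2
    _ ≤ ∑ x, q * hdeg Γ x := sum_le_sum_of_subset (filter_subset _ _)
    _ = k * q * Γ.card := by rw [← mul_sum, sum_hdeg hΓ]; ring

/-- `StarAt Γ e x`: the pairs of `Γ` contain the spanning star of `e` with centre `x`. -/
def StarAt [DecidableEq β] (Γ : Finset (Finset β)) (e : Finset β) (x : β) : Prop :=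
  x ∈ e ∧ ∀ y ∈ e, y ≠ x → {x, y} ∈ Γ

theorem StarAt.exists_insert_hverts_eq [DecidableEq β] {e : Finset β} {x : β}
    (hx : StarAt Γ e x) (he : e.card = k + 1) :
    ∃ Q ∈ powersetCard k (Γ.filter (x ∈ ·)), insert x (hverts Q) = e := by
  have hinj : Set.InjOn (fun y => ({x, y} : Finset β)) (e.erase x) := fun y hy z _ hyz => by
    have hmem : y ∈ ({x, z} : Finset β) :=
      (show ({x, y} : Finset β) = {x, z} from hyz) ▸ mem_insert_of_mem (mem_singleton_self y)
    exact mem_singleton.1 ((mem_insert.1 hmem).resolve_left (mem_erase.1 hy).1)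
  refine ⟨(e.erase x).image fun y => {x, y}, mem_powersetCard.2 ⟨fun P hP => ?_, ?_⟩, ?_⟩
  · obtain ⟨y, hy, rfl⟩ := mem_image.1 hP
    exact mem_filter.2
      ⟨hx.2 y (mem_erase.1 hy).2 (mem_erase.1 hy).1, mem_insert_self x {y}⟩
  · rw [card_image_of_injOn hinj, card_erase_of_mem hx.1, he, Nat.add_sub_cancel]
  · refine Subset.antisymm (insert_subset hx.1 fun y hy => ?_) fun y hy => ?_
    · obtain ⟨P, hP, hyP⟩ := mem_hverts.1 hy
      obtain ⟨z, hz, rfl⟩ := mem_image.1 hP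
      exact insert_subset hx.1 (singleton_subset_iff.2 (mem_erase.1 hz).2) hyP
    · rcases eq_or_ne y x with rfl | hyx
      · exact mem_insert_self _ _
      · exact mem_insert_of_mem (mem_hverts.2 ⟨{x, y}, mem_image.2 ⟨y, mem_erase.2 ⟨hyx, hy⟩, rfl⟩,
          mem_insert_of_mem (mem_singleton_self y)⟩)

theorem card_starAt_le [DecidableEq β] {T : Finset (Finset β)} {U : Finset β}
    (hT : (T : Set (Finset β)).Sized (k + 1)) (hTU : ∀ e ∈ T, ∃ x ∈ U, StarAt Γ e x) :
    T.card ≤ ∑ x ∈ U, hdeg Γ x ^ k := by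
  have hcover : T ⊆ U.biUnion fun x =>
      (powersetCard k (Γ.filter (x ∈ ·))).image fun Q => insert x (hverts Q) := fun e he => by
    obtain ⟨x, hxU, hx⟩ := hTU e he
    exact mem_biUnion.2 ⟨x, hxU, mem_image.2 (hx.exists_insert_hverts_eq (hT he))⟩
  refine (card_le_card hcover).trans (card_biUnion_le.trans (sum_le_sum fun x _ => ?_))
  calc ((powersetCard k (Γ.filter (x ∈ ·))).image fun Q => insert x (hverts Q)).card
      ≤ (powersetCard k (Γ.filter (x ∈ ·))).card := card_image_le
    _ = (hdeg Γ x).choose k := card_powersetCard k _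
    _ ≤ hdeg Γ x ^ k := Nat.choose_le_pow _ _

theorem mul_card_lightStar_le [Finite β] [DecidableEq β] (hΓ : (Γ : Set (Finset β)).Sized 2)
    {T : Finset (Finset β)} (hT : (T : Set (Finset β)).Sized (k + 3))
    (hTΓ : ∀ e ∈ T, ∃ x, q * hdeg Γ x < n ∧ StarAt Γ e x) :
    q * T.card ≤ 2 * Γ.card * n ^ (k + 1) := by
  cases nonempty_fintype β
  rcases Nat.eq_zero_or_pos q with rfl | hq
  · simp
  set U : Finset β := univ.filter fun x => q * hdeg Γ x < n
  have hU : T.card ≤ ∑ x ∈ U, hdeg Γ x ^ (k + 2) := card_starAt_le hT fun e he => by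
    obtain ⟨x, hlight, hstar⟩ := hTΓ e he
    exact ⟨x, mem_filter.2 ⟨mem_univ x, hlight⟩, hstar⟩
  have hlight : ∀ x ∈ U, q * hdeg Γ x ^ (k + 2) ≤ hdeg Γ x * n ^ (k + 1) := fun x hx => by
    have hqn : q * hdeg Γ x ≤ n := (mem_filter.1 hx).2.le
    have hn : hdeg Γ x ≤ n := (Nat.le_mul_of_pos_left _ hq).trans hqn
    calc q * hdeg Γ x ^ (k + 2) = hdeg Γ x * (q * hdeg Γ x * hdeg Γ x ^ k) := by ring
      _ ≤ hdeg Γ x * (n * n ^ k) := by gcongr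
      _ = hdeg Γ x * n ^ (k + 1) := by ring
  calc q * T.card ≤ ∑ x ∈ U, q * hdeg Γ x ^ (k + 2) := by
        rw [← mul_sum]
        exact Nat.mul_le_mul_left q hU
    _ ≤ ∑ x, hdeg Γ x * n ^ (k + 1) :=
        (sum_le_sum hlight).trans (sum_le_sum_of_subset (filter_subset _ _))
    _ = 2 * Γ.card * n ^ (k + 1) := by rw [← sum_mul, sum_hdeg hΓ]

theorem card_le_of_disjoint_pairs [Fintype β] {T : Finset (Finset β)} {r : ℕ}
    (hΓ : (Γ : Set (Finset β)).Sized 2) (hT : (T : Set (Finset β)).Sized r)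
    (hTΓ : ∀ e ∈ T, ∃ P ∈ Γ, ∃ Q ∈ Γ, P ⊆ e ∧ Q ⊆ e ∧ Disjoint P Q) :
    T.card ≤ Γ.card * Γ.card * Fintype.card β ^ (r - 4) := by
  have hcover : T ⊆ ((Γ ×ˢ Γ) ×ˢ powersetCard (r - 4) univ).image
      (fun z => z.2 ∪ (z.1.1 ∪ z.1.2)) := fun e he => by
    obtain ⟨P, hP, Q, hQ, hPe, hQe, hPQ⟩ := hTΓ e he
    have hcard : (e \ (P ∪ Q)).card = r - 4 := by
      rw [card_sdiff_of_subset (union_subset hPe hQe), card_union_of_disjoint hPQ, hΓ hP, hΓ hQ,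
        hT he]
    exact mem_image.2 ⟨((P, Q), e \ (P ∪ Q)), mem_product.2 ⟨mem_product.2 ⟨hP, hQ⟩,
      mem_powersetCard.2 ⟨subset_univ _, hcard⟩⟩, sdiff_union_of_subset (union_subset hPe hQe)⟩
  calc T.card ≤ ((Γ ×ˢ Γ) ×ˢ powersetCard (r - 4) (univ : Finset β)).card :=
        (card_le_card hcover).trans card_image_le
    _ ≤ Γ.card * Γ.card * Fintype.card β ^ (r - 4) := by
        rw [card_product, card_product]
        exact Nat.mul_le_mul_left _ (card_powersetCard_univ_le_pow _)

end Counting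

/-! ### Fat pairs and heavy vertices -/

section Cores

variable [DecidableEq α] {H T : Finset (Finset α)} {φ : Finset α → Finset α} {R B : Finset α}
  {r : ℕ}

/-- `φ` assigns to every edge of `H` a core: a part of the edge containing all the vertices it
shares with other edges. -/
def IsCore (H : Finset (Finset α)) (φ : Finset α → Finset α) : Prop :=
  ∀ B ∈ H, φ B ⊆ B ∧ ∀ C ∈ H, C ≠ B → B ∩ C ⊆ φ B

theorem exists_isCore_card_eq_two (hH : (H : Set (Finset α)).Sized r) (hr : 2 ≤ r)
    (hred : Reducible (r - 2) H) : ∃ φ, IsCore H φ ∧ ∀ B ∈ H, (φ B).card = 2 := by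
  have hcore : ∀ B ∈ H, ∃ D, B.filter (fun x => ¬hdeg H x = 1) ⊆ D ∧ D ⊆ B ∧ D.card = 2 :=
    fun B hB => exists_subsuperset_card_eq (filter_subset _ B) (by
      have hsum := card_filter_add_card_filter_not (s := B) fun x => hdeg H x = 1
      have hdeg_one := hred B hB
      have hcard : B.card = r := hH hB
      omega) (hr.trans_eq (hH hB).symm)
  choose! φ hdeg hφ hcard using hcore
  refine ⟨φ, fun B hB => ⟨hφ B hB, fun C hC hCB x hx => hdeg B hB ?_⟩, hcard⟩
  obtain ⟨hxB, hxC⟩ := mem_inter.1 hx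
  refine mem_filter.2 ⟨hxB, (one_lt_card.2 ⟨C, ?_, B, ?_, hCB⟩).ne'⟩
  · exact mem_filter.2 ⟨hC, hxC⟩
  · exact mem_filter.2 ⟨hB, hxB⟩

theorem mem_hverts_image {x : α} : x ∈ hverts (H.image φ) ↔ ∃ B ∈ H, x ∈ φ B := by
  rw [mem_hverts, exists_mem_image]

theorem IsCore.isHypertree_image (hφ : IsCore H φ) (hH : IsHypertree R H) :
    IsHypertree (φ R) (H.image φ) := by
  refine hH.image (fun B hB => (hφ B hB).1) fun B hB C _ Q hQ hBCQ => ?_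
  rcases eq_or_ne B Q with rfl | hne
  · exact inter_subset_left
  · exact fun x hx => (hφ Q hQ).2 B hB hne
      (mem_inter.2 ⟨hBCQ hx, (hφ B hB).1 (mem_inter.1 hx).1⟩)

theorem IsCore.inter_eq (hφ : IsCore H φ) (hTH : T ⊆ H) (hB : B ∈ H) (hBT : B ∉ T) :
    B ∩ (hverts (H.image φ) ∪ hverts T) = φ B := by
  refine Subset.antisymm (fun x hx => ?_) fun x hx =>
    mem_inter.2 ⟨(hφ B hB).1 hx, mem_union_left _ (subset_hverts (mem_image_of_mem φ hB) hx)⟩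
  obtain ⟨hxB, hx⟩ := mem_inter.1 hx
  rcases mem_union.1 hx with hx | hx
  · obtain ⟨C, hC, hxC⟩ := mem_hverts_image.1 hx
    rcases eq_or_ne C B with rfl | hne
    · exact hxC
    · exact (hφ B hB).2 C hC hne (mem_inter.2 ⟨hxB, (hφ C hC).1 hxC⟩)
  · obtain ⟨C, hC, hxC⟩ := mem_hverts.1 hx
    exact (hφ B hB).2 C (hTH hC) (ne_of_mem_of_not_mem hC hBT) (mem_inter.2 ⟨hxB, hxC⟩)

theorem IsCore.hverts_image_subset (hφ : IsCore H φ) : hverts (H.image φ) ⊆ hverts H :=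
  fun _ hx => by
    obtain ⟨C, hC, hxC⟩ := mem_hverts_image.1 hx
    exact subset_hverts hC ((hφ C hC).1 hxC)

end Cores

section Fat

variable [DecidableEq β]

/-- A set `P` is `s`-fat in `F` if it extends to an edge of `F` whose remaining vertices avoid
any prescribed set of at most `s` vertices. -/
def Fat (s : ℕ) (F : Finset (Finset β)) (P : Finset β) : Prop :=
  ∀ X : Finset β, X.card ≤ s → ∃ e ∈ F, P ⊆ e ∧ Disjoint (e \ P) X

variable [DecidableEq α] {H : Finset (Finset α)} {φ : Finset α → Finset α} {F Γ : Finset (Finset β)}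
  {f : α → β} {r s : ℕ}

theorem IsCore.exists_extension_of_fat (hφ : IsCore H φ) (hH : (H : Set (Finset α)).Sized r)
    (hF : (F : Set (Finset β)).Sized r) (hs : (hverts H).card ≤ s)
    (hf : Set.InjOn f (hverts (H.image φ))) (hfat : ∀ B ∈ H, Fat s F ((φ B).image f))
    {T : Finset (Finset α)} (hTH : T ⊆ H) :
    ∃ f' : α → β, Set.EqOn f' f (hverts (H.image φ)) ∧
      Set.InjOn f' (hverts (H.image φ) ∪ hverts T : Finset α) ∧ ∀ B ∈ T, B.image f' ∈ F := by
  induction T using Finset.induction_on with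
  | empty => exact ⟨f, fun _ _ => rfl, by simpa [hverts] using hf, by simp⟩
  | insert B T hBT ih =>
    obtain ⟨hB, hTH⟩ := insert_subset_iff.1 hTH
    obtain ⟨f', hf'f, hf', hf'F⟩ := ih hTH
    set V := hverts (H.image φ) ∪ hverts T
    have hBV : B ∩ V = φ B := hφ.inter_eq hTH hB hBT
    have hVs : (V.image f').card ≤ s := card_image_le.trans <|
      (card_le_card (union_subset hφ.hverts_image_subset (hverts_mono hTH))).trans hs
    have himage : (B ∩ V).image f' = (φ B).image f := by
      rw [hBV]
      exact image_congr fun x hx => hf'f (subset_hverts (mem_image_of_mem φ hB) hx)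
    obtain ⟨e, he, hsub, hdisj⟩ := hfat B hB _ hVs
    rw [← himage] at hsub hdisj
    obtain ⟨f'', hf''f', hf'', rfl⟩ :=
      exists_injOn_extend_union hf' ((hH hB).trans (hF he).symm) hsub hdisj
    refine ⟨f'', fun x hx => ?_, by rwa [hverts_insert, ← union_assoc], fun C hC => ?_⟩
    · exact (hf''f' (mem_union_left _ hx)).trans (hf'f hx)
    · rcases mem_insert.1 hC with rfl | hC
      · exact he
      · rw [image_congr fun x hx => hf''f' (mem_union_right _ (subset_hverts hC hx))]
        exact hf'F C hC

/-- The full family of fat pairs hosts the cores of the edges; fatness completes each core to an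
edge by new vertices. -/
theorem containsCopy_of_full_fat {R : Finset α} (hH : IsHypertree R H)
    (hHr : (H : Set (Finset α)).Sized r) (hr : 2 ≤ r) (hred : Reducible (r - 2) H)
    (hF : (F : Set (Finset β)).Sized r) (hs : (hverts H).card ≤ s)
    (hΓ : Full s Γ) (hΓ2 : (Γ : Set (Finset β)).Sized 2) (hfat : ∀ P ∈ Γ, Fat s F P)
    (hne : Γ.Nonempty) : ContainsCopy F H := by
  obtain ⟨φ, hφ, hφ2⟩ := exists_isCore_card_eq_two hHr hr hred
  obtain ⟨P, hP⟩ := hne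
  have himage2 : (H.image φ : Set (Finset α)).Sized 2 := fun C hC => by
    obtain ⟨B, hB, rfl⟩ := mem_image.1 (mem_coe.1 hC)
    exact hφ2 B hB
  obtain ⟨f, hf, hfΓ⟩ := hΓ.containsCopy (hφ.isHypertree_image hH) himage2 two_pos hP (hΓ2 hP)
    ((card_le_card hφ.hverts_image_subset).trans hs)
  obtain ⟨f', -, hf', hf'F⟩ := hφ.exists_extension_of_fat hHr hF hs hf
    (fun B hB => hfat _ (hfΓ _ (mem_image_of_mem φ hB))) subset_rfl
  exact ⟨f', hf'.mono (mod_cast subset_union_right), hf'F⟩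

/-- The pairs of vertices that are `s`-fat in `F`, as a graph. -/
def fatPairs [Fintype β] (s : ℕ) (F : Finset (Finset β)) : Finset (Finset β) :=
  (powersetCard 2 univ).filter (Fat s F)

theorem sized_fatPairs [Fintype β] : (fatPairs s F : Set (Finset β)).Sized 2 :=
  fun _ hP => (mem_powersetCard.1 (mem_filter.1 hP).1).2

theorem pair_mem_fatPairs [Fintype β] {x y : β} (hxy : x ≠ y) :
    {x, y} ∈ fatPairs s F ↔ Fat s F {x, y} := by
  simp [fatPairs, mem_powersetCard, card_pair hxy]

theorem card_fatPairs_le [Fintype β] {R : Finset α} (hH : IsHypertree R H)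
    (hHr : (H : Set (Finset α)).Sized r) (hr : 2 ≤ r) (hred : Reducible (r - 2) H)
    (hF : (F : Set (Finset β)).Sized r) (hs : (hverts H).card ≤ s) (hfree : ¬ContainsCopy F H) :
    (fatPairs s F).card ≤ s * Fintype.card β := by
  have hshadow : (fatPairs s F).shadow.card ≤ Fintype.card β := by
    simpa using card_le_pow_of_sized (sized_fatPairs (s := s) (F := F)).shadow
  refine (Full.card_le_mul_card_shadow fun Γ hΓ hfull => ?_).trans
    (Nat.mul_le_mul_left s hshadow)
  by_contra hne
  exact hfree (containsCopy_of_full_fat hH hHr hr hred hF hs hfull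
    (sized_fatPairs.mono (mod_cast hΓ)) (fun P hP => (mem_filter.1 (hΓ hP)).2)
    (nonempty_iff_ne_empty.2 hne))

end Fat

section Recovery

theorem exists_ne_apply_of_ne_self {Z : Finset β} (hZ : 3 ≤ Z.card) {c : β → β}
    (hc : ∀ y ∈ Z, c y ∈ Z ∧ c y ≠ y) : ∃ a ∈ Z, ∃ b ∈ Z, c a ≠ c b ∧ a ≠ c b := by
  by_cases hinv : ∀ a ∈ Z, c (c a) = a
  · obtain ⟨a, ha⟩ : Z.Nonempty := card_pos.1 (by omega)
    obtain ⟨b, hbZ, hb⟩ := exists_mem_notMem_of_card_lt_card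
      ((card_le_two (a := a) (b := c a)).trans_lt hZ)
    refine ⟨a, ha, b, hbZ, fun hab => ?_, fun hab => ?_⟩
    · exact hb (by rw [← hinv b hbZ, ← hab, hinv a ha]; exact mem_insert_self _ _)
    · exact hb (by rw [hab, hinv b hbZ]; simp)
  · push Not at hinv
    obtain ⟨a, ha, hca⟩ := hinv
    exact ⟨a, ha, c a, (hc a ha).1, (hc _ (hc a ha).1).2.symm, hca.symm⟩

variable [DecidableEq β] {F T : Finset (Finset β)} {s : ℕ}

theorem exists_blocking_set (s : ℕ) (F : Finset (Finset β)) (P : Finset β) :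
    ∃ X : Finset β, X.card ≤ s ∧
      (¬Fat s F P → ∀ e ∈ F, P ⊆ e → ∃ z ∈ X, z ∈ e ∧ z ∉ P) := by
  by_cases hP : Fat s F P
  · exact ⟨∅, by simp, fun h => absurd hP h⟩
  · have hblock := hP
    unfold Fat at hblock
    push Not at hblock
    obtain ⟨X, hX, hmeet⟩ := hblock
    refine ⟨X, hX, fun _ e he hPe => ?_⟩
    obtain ⟨z, hz, hzX⟩ := not_disjoint_iff.1 (hmeet e he hPe)
    exact ⟨z, hzX, mem_sdiff.1 hz⟩

theorem exists_blocking_closure (s : ℕ) (F : Finset (Finset β)) :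
    ∃ Cl : Finset β → Finset β, Monotone Cl ∧ (∀ g, (Cl g).card ≤ g.card * g.card * s) ∧
      ∀ x y, ¬Fat s F {x, y} → ∀ e ∈ F, x ∈ e → y ∈ e →
        ∃ z ∈ Cl {x, y}, z ∈ e ∧ z ≠ x ∧ z ≠ y := by
  choose X hX hblock using exists_blocking_set s F
  refine ⟨fun g => (g ×ˢ g).biUnion fun z => X {z.1, z.2},
    fun g g' hg => biUnion_subset_biUnion_of_subset_left _ (product_subset_product hg hg),
    fun g => ?_, fun x y hxy e he hx hy => ?_⟩
  · exact (card_biUnion_le_card_mul _ _ s fun z _ => hX _).trans_eq (by rw [card_product])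
  · obtain ⟨z, hzX, hze, hz⟩ := hblock _ hxy e he (by grind)
    refine ⟨z, mem_biUnion.2 ⟨(x, y), mem_product.2 ⟨?_, ?_⟩, hzX⟩, hze, ?_, ?_⟩ <;> grind

/-- Two vertices of `e` can be deleted and then recovered, one after the other, from the rest. -/
theorem exists_two_mem_closure {Cl : Finset β → Finset β} (hCl : Monotone Cl) {e : Finset β}
    {x : β} (he : 4 ≤ e.card) (hx : x ∈ e)
    (hxe : ∀ y ∈ e, y ≠ x → ∃ z ∈ Cl {x, y}, z ∈ e ∧ z ≠ x ∧ z ≠ y) :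
    ∃ v ∈ e, ∃ u ∈ e.erase v, u ∈ Cl ((e.erase v).erase u) ∧ v ∈ Cl (e.erase v) := by
  choose! c hcCl hce hcx hcy using hxe
  obtain ⟨a, ha, b, hb, hab, hacb⟩ := exists_ne_apply_of_ne_self (Z := e.erase x) (c := c)
    (by rw [card_erase_of_mem hx]; omega) fun y hy =>
      have hy := mem_erase.1 hy
      ⟨mem_erase.2 ⟨hcx y hy.2 hy.1, hce y hy.2 hy.1⟩, hcy y hy.2 hy.1⟩
  obtain ⟨hax, hae⟩ := mem_erase.1 ha
  obtain ⟨hbx, hbe⟩ := mem_erase.1 hb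
  have hsub_u : {x, a} ⊆ (e.erase (c b)).erase (c a) := by
    have := hcx a hae hax
    have := hcx b hbe hbx
    have := hcy a hae hax
    grind
  have hsub_v : {x, b} ⊆ e.erase (c b) := by
    have := hcx b hbe hbx
    have := hcy b hbe hbx
    grind
  exact ⟨c b, hce b hbe hbx, c a, mem_erase.2 ⟨hab, hce a hae hax⟩,
    hCl hsub_u (hcCl a hae hax), hCl hsub_v (hcCl b hbe hbx)⟩

theorem card_le_of_two_mem_closure [Fintype β] {Cl : Finset β → Finset β} {k M : ℕ}
    (hCl : ∀ g, g.card ≤ k + 1 → (Cl g).card ≤ M) (hT : (T : Set (Finset β)).Sized (k + 2))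
    (hTCl : ∀ e ∈ T, ∃ v ∈ e, ∃ u ∈ e.erase v,
      u ∈ Cl ((e.erase v).erase u) ∧ v ∈ Cl (e.erase v)) :
    T.card ≤ Fintype.card β ^ k * (M * M) := by
  have hcover : T ⊆ (powersetCard k (univ : Finset β)).biUnion fun g =>
      (Cl g).biUnion fun u => (Cl (insert u g)).image fun v => insert v (insert u g) := by
    intro e he
    obtain ⟨v, hv, u, hu, huCl, hvCl⟩ := hTCl e he
    refine mem_biUnion.2 ⟨(e.erase v).erase u, mem_powersetCard.2 ⟨subset_univ _, ?_⟩,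
      mem_biUnion.2 ⟨u, huCl, mem_image.2 ⟨v, ?_, ?_⟩⟩⟩
    · rw [card_erase_of_mem hu, card_erase_of_mem hv, hT he]
      rfl
    · rwa [insert_erase hu]
    · rw [insert_erase hu, insert_erase hv]
  refine (card_le_card hcover).trans ((card_biUnion_le_card_mul _ _ (M * M) fun g hg => ?_).trans
    (Nat.mul_le_mul_right _ (card_powersetCard_univ_le_pow k)))
  have hg : g.card = k := (mem_powersetCard.1 hg).2
  refine (card_biUnion_le_card_mul _ _ M fun u _ => ?_).trans
    (Nat.mul_le_mul_right M (hCl g (by omega)))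
  exact card_image_le.trans (hCl _ ((card_insert_le u g).trans (by omega)))

theorem card_isolated_le [Fintype β] {k : ℕ} (hk : 2 ≤ k) (hTF : T ⊆ F)
    (hT : (T : Set (Finset β)).Sized (k + 2))
    (hTfat : ∀ e ∈ T, ∃ x ∈ e, ∀ y ∈ e, y ≠ x → {x, y} ∉ fatPairs s F) :
    T.card ≤ Fintype.card β ^ k * ((k + 2) * (k + 2) * s * ((k + 2) * (k + 2) * s)) := by
  obtain ⟨Cl, hmono, hcard, hblock⟩ := exists_blocking_closure s F
  refine card_le_of_two_mem_closure (Cl := Cl) (fun g hg => (hcard g).trans ?_) hT fun e he => ?_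
  · have hgk : g.card ≤ k + 2 := by omega
    gcongr
  · obtain ⟨x, hx, hxe⟩ := hTfat e he
    have hcard : e.card = k + 2 := hT he
    refine exists_two_mem_closure hmono (by omega) hx fun y hy hyx => ?_
    exact hblock x y (fun hfat => hxe y hy hyx ((pair_mem_fatPairs hyx.symm).2 hfat)) e (hTF he)
      hx hy

end Recovery

section Heavy

variable [DecidableEq β] {Γ F : Finset (Finset β)} {e : Finset β} {r q : ℕ}

theorem exists_starAt_of_intersecting (he : 3 ≤ e.card)
    (hcov : ∀ x ∈ e, ∃ y ∈ e, y ≠ x ∧ {x, y} ∈ Γ)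
    (hΓ : ∀ P ∈ Γ, ∀ Q ∈ Γ, P ⊆ e → Q ⊆ e → ¬Disjoint P Q) : ∃ x, StarAt Γ e x := by
  have hmeet : ∀ {a b c d}, a ∈ e → b ∈ e → c ∈ e → d ∈ e → {a, b} ∈ Γ → {c, d} ∈ Γ →
      a = c ∨ a = d ∨ b = c ∨ b = d := fun {a b c d} ha hb hc hd hab hcd => by
    have := hΓ _ hab _ hcd (by grind) (by grind)
    simp only [disjoint_insert_left, disjoint_singleton_left, mem_insert, mem_singleton] at this
    tauto
  obtain ⟨x, z, c, hx, hz, hc, hzx, _, hcz, hxz, hxc⟩ :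
      ∃ x z c, x ∈ e ∧ z ∈ e ∧ c ∈ e ∧ z ≠ x ∧ c ≠ x ∧ c ≠ z ∧ {x, z} ∈ Γ ∧ {x, c} ∈ Γ := by
    obtain ⟨a, ha⟩ : e.Nonempty := card_pos.1 (by omega)
    obtain ⟨b, hb, hba, hab⟩ := hcov a ha
    obtain ⟨c, hc, hcab⟩ := exists_mem_notMem_of_card_lt_card
      ((card_le_two (a := a) (b := b)).trans_lt he)
    obtain ⟨x, hx, hxc, hcx⟩ := hcov c hc
    have hx' := hmeet ha hb hc hx hab hcx
    have : x = a ∨ x = b := by grind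
    rcases this with rfl | rfl
    · exact ⟨x, b, c, by grind [pair_comm]⟩
    · exact ⟨x, a, c, by grind [pair_comm]⟩
  refine ⟨x, hx, fun y hy hyx => ?_⟩
  obtain ⟨y', hy', _, hyy'⟩ := hcov y hy
  have := hmeet hx hz hy hy' hxz hyy'
  have := hmeet hx hc hy hy' hxc hyy'
  grind [pair_comm]

theorem starAt_or_disjoint_pairs_or_isolated (Γ : Finset (Finset β)) (he : 3 ≤ e.card) :
    (∃ x, StarAt Γ e x) ∨ (∃ P ∈ Γ, ∃ Q ∈ Γ, P ⊆ e ∧ Q ⊆ e ∧ Disjoint P Q) ∨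
      ∃ x ∈ e, ∀ y ∈ e, y ≠ x → {x, y} ∉ Γ := by
  by_contra! h
  obtain ⟨hstar, hdisj, hcov⟩ := h
  obtain ⟨x, hx⟩ := exists_starAt_of_intersecting he hcov hdisj
  exact hstar x hx

variable [DecidableEq α] [Fintype β] {H : Finset (Finset α)} {R : Finset α} {s : ℕ}

theorem mul_card_disjoint_heavy_le (hr : 4 ≤ r) (hF : (F : Set (Finset β)).Sized r)
    (hΓ : Γ = fatPairs s F) (hΓs : Γ.card ≤ s * Fintype.card β)
    (hq : q * (r * r * s * (r * r * s) + s * s) ≤ Fintype.card β) :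
    q * (F.filter fun e => Disjoint e
        (univ.filter fun x => Fintype.card β ≤ q * hdeg Γ x)).card ≤
      (2 * s + 1) * Fintype.card β ^ (r - 1) := by
  obtain ⟨k, rfl⟩ := Nat.exists_eq_add_of_le' hr
  set n := Fintype.card β
  set T := F.filter fun e => Disjoint e (univ.filter fun x => n ≤ q * hdeg Γ x)
  set T₁ := F.filter fun e => ∃ x ∈ e, ∀ y ∈ e, y ≠ x → {x, y} ∉ Γ
  set T₂ := F.filter fun e => ∃ P ∈ Γ, ∃ Q ∈ Γ, P ⊆ e ∧ Q ⊆ e ∧ Disjoint P Q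
  set T₃ := F.filter fun e => ∃ x, q * hdeg Γ x < n ∧ StarAt Γ e x
  have hcover : T ⊆ T₃ ∪ (T₂ ∪ T₁) := fun e he => by
    obtain ⟨heF, hdisj⟩ := mem_filter.1 he
    have hcard : e.card = k + 4 := hF heF
    rcases starAt_or_disjoint_pairs_or_isolated Γ (by omega : 3 ≤ e.card) with
      ⟨x, hx⟩ | h | h
    · refine mem_union_left _ (mem_filter.2 ⟨heF, x, not_le.1 fun hxn => ?_, hx⟩)
      exact disjoint_left.1 hdisj hx.1 (mem_filter.2 ⟨mem_univ x, hxn⟩)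
    · exact mem_union_right _ (mem_union_left _ (mem_filter.2 ⟨heF, h⟩))
    · exact mem_union_right _ (mem_union_right _ (mem_filter.2 ⟨heF, h⟩))
  have hT₁ : T₁.card ≤ n ^ (k + 2) * ((k + 4) * (k + 4) * s * ((k + 4) * (k + 4) * s)) :=
    card_isolated_le (by omega) (filter_subset _ F) (hF.mono (filter_subset _ _))
      fun e he => hΓ ▸ (mem_filter.1 he).2
  have hT₂ : T₂.card ≤ s * n * (s * n) * n ^ k :=
    (card_le_of_disjoint_pairs (hΓ ▸ sized_fatPairs) (hF.mono (filter_subset _ _))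
      fun e he => (mem_filter.1 he).2).trans
      (Nat.mul_le_mul_right _ (Nat.mul_le_mul hΓs hΓs))
  have hT₃ : q * T₃.card ≤ 2 * (s * n) * n ^ (k + 2) :=
    (mul_card_lightStar_le (k := k + 1) (hΓ ▸ sized_fatPairs) (hF.mono (filter_subset _ _))
      fun e he => (mem_filter.1 he).2).trans (by gcongr)
  have hT : T.card ≤ T₃.card + (T₂.card + T₁.card) := (card_le_card hcover).trans <|
    (card_union_le _ _).trans (Nat.add_le_add_left (card_union_le _ _) _)
  calc q * T.card ≤ q * T₃.card + q * (T₂.card + T₁.card) := by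
        rw [← mul_add]; exact Nat.mul_le_mul_left q hT
    _ ≤ 2 * (s * n) * n ^ (k + 2) + q * (s * n * (s * n) * n ^ k +
          n ^ (k + 2) * ((k + 4) * (k + 4) * s * ((k + 4) * (k + 4) * s))) := by gcongr
    _ = (2 * s * n + q * ((k + 4) * (k + 4) * s * ((k + 4) * (k + 4) * s) + s * s)) *
          n ^ (k + 2) := by ring
    _ ≤ (2 * s * n + n) * n ^ (k + 2) := by gcongr
    _ = (2 * s + 1) * n ^ (k + 4 - 1) := by rw [show k + 4 - 1 = k + 2 + 1 from rfl]; ring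

theorem exists_small_heavy_set (hH : IsHypertree R H) (hHr : (H : Set (Finset α)).Sized r)
    (hr : 4 ≤ r) (hred : Reducible (r - 2) H) (hF : (F : Set (Finset β)).Sized r)
    (hfree : ¬ContainsCopy F H) (hs : (hverts H).card ≤ s) [Nonempty β]
    (hq : q * (r * r * s * (r * r * s) + s * s) ≤ Fintype.card β) :
    ∃ L : Finset β, L.card ≤ 2 * s * q ∧
      q * (F.filter fun e => Disjoint e L).card ≤ (2 * s + 1) * Fintype.card β ^ (r - 1) := by
  have hΓ : (fatPairs s F).card ≤ s * Fintype.card β :=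
    card_fatPairs_le hH hHr (by omega) hred hF hs hfree
  refine ⟨_, Nat.le_of_mul_le_mul_right ?_ (Fintype.card_pos (α := β)),
    mul_card_disjoint_heavy_le hr hF rfl hΓ hq⟩
  calc _ ≤ 2 * q * (fatPairs s F).card := card_heavy_mul_le sized_fatPairs _ q
    _ ≤ 2 * q * (s * Fintype.card β) := Nat.mul_le_mul_left _ hΓ
    _ = 2 * s * q * Fintype.card β := by ring

end Heavy

/-! ### Colourings constant under small changes -/

section Connect

variable {ι γ : Type*}

theorem eq_of_forall_hybrid [Finite ι] [DecidableEq ι] {good : (ι → β) → Prop} {col : (ι → β) → γ}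
    (hcol : ∀ x i v, good x → good (Function.update x i v) →
      col (Function.update x i v) = col x)
    {x y : ι → β} (hgood : ∀ s : Finset ι, good (s.piecewise y x)) : col y = col x := by
  cases nonempty_fintype ι
  have hhybrid : ∀ s : Finset ι, col (s.piecewise y x) = col x := by
    intro s
    induction s using Finset.induction_on with
    | empty => rw [piecewise_empty]
    | insert i s _ ih =>
      rw [piecewise_insert, hcol _ _ _ (hgood s) (piecewise_insert s y x i ▸ hgood _), ih]
  simpa using hhybrid univ

theorem card_image_univ [Fintype ι] [DecidableEq β] {x : ι → β} (hx : Function.Injective x) :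
    (univ.image x).card = Fintype.card ι := by
  rw [card_image_of_injective _ hx, card_univ]

theorem card_le_card_inter_image_update [Fintype ι] [DecidableEq ι] [DecidableEq β] {x : ι → β}
    (hx : Function.Injective x) (i : ι) (v : β) :
    Fintype.card ι ≤ (univ.image x ∩ univ.image (Function.update x i v)).card + 1 := by
  have hsub : (univ.erase i).image x ⊆ univ.image x ∩ univ.image (Function.update x i v) := by
    intro y hy
    obtain ⟨j, hj, rfl⟩ := mem_image.1 hy
    refine mem_inter.2 ⟨mem_image_of_mem x (mem_univ _), mem_image.2 ⟨j, mem_univ _, ?_⟩⟩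
    rw [Function.update_of_ne (ne_of_mem_erase hj)]
  have hcard := card_le_card hsub
  rw [card_image_of_injective _ hx, card_erase_of_mem (mem_univ _), card_univ] at hcard
  omega

theorem exists_injective_image_eq [DecidableEq β] {k : ℕ} {D : Finset β} (hD : D.card = k) :
    ∃ x : Fin k → β, Function.Injective x ∧ univ.image x = D := by
  refine ⟨fun i => (D.equivFinOfCardEq hD).symm i, ?_, ?_⟩
  · exact Subtype.val_injective.comp (Equiv.injective _)
  · ext y
    refine ⟨fun hy => ?_, fun hy => ?_⟩
    · obtain ⟨i, -, rfl⟩ := mem_image.1 hy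
      exact Subtype.prop _
    · exact mem_image.2 ⟨D.equivFinOfCardEq hD ⟨y, hy⟩, mem_univ _, by simp⟩

variable [Fintype ι] [DecidableEq ι] [Fintype β]

theorem card_filter_piecewise (P : (ι → β) → Prop) [DecidablePred P] (s : Finset ι) :
    ((univ : Finset ((ι → β) × (ι → β))).filter fun z => P (s.piecewise z.1 z.2)).card =
      (univ.filter P).card * Fintype.card (ι → β) := by
  have hswap : ∀ x y : ι → β,
      s.piecewise (s.piecewise x y) (s.piecewise y x) = x := fun x y => by
    funext i
    by_cases hi : i ∈ s <;> simp [hi]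
  rw [← card_univ, ← card_product]
  refine card_nbij' (fun z => (s.piecewise z.1 z.2, s.piecewise z.2 z.1))
    (fun z => (s.piecewise z.1 z.2, s.piecewise z.2 z.1)) ?_ ?_ ?_ ?_
  · intro z hz
    simpa using hz
  · intro z hz
    simpa [hswap] using hz
  · intro z _
    simp only [hswap]
  · intro z _
    simp only [hswap]

/-- Averaging over the first tuple, each hybrid of a random pair of tuples being a uniformly
random tuple. -/
theorem exists_card_hybrid_le [Nonempty (ι → β)] (good : (ι → β) → Prop)
    [DecidablePred good] :
    ∃ x : ι → β, (univ.filter fun y => ∃ s : Finset ι, ¬good (s.piecewise y x)).card ≤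
      2 ^ Fintype.card ι * (univ.filter fun x => ¬good x).card := by
  have hpairs : ((univ : Finset ((ι → β) × (ι → β))).filter
      fun z => ∃ s : Finset ι, ¬good (s.piecewise z.2 z.1)).card ≤
        2 ^ Fintype.card ι * ((univ.filter fun x => ¬good x).card * Fintype.card (ι → β)) := by
    have hunion : ((univ : Finset ((ι → β) × (ι → β))).filter
        fun z => ∃ s : Finset ι, ¬good (s.piecewise z.2 z.1)) =
        univ.biUnion fun s : Finset ι => univ.filter fun z => ¬good (s.piecewise z.2 z.1) := by
      ext z
      simp
    rw [hunion, ← Fintype.card_finset, ← card_univ]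
    refine card_biUnion_le_card_mul _ _ _ fun s _ => ?_
    rw [← card_filter_piecewise (fun x => ¬good x) sᶜ]
    simp only [piecewise_compl, le_refl]
  have hsum : ∑ x : ι → β, (univ.filter fun y => ∃ s : Finset ι, ¬good (s.piecewise y x)).card ≤
      ∑ _x : ι → β, 2 ^ Fintype.card ι * (univ.filter fun x => ¬good x).card := by
    simp only [card_filter, Fintype.sum_prod_type] at hpairs ⊢
    rw [sum_const, card_univ, smul_eq_mul]
    linarith
  obtain ⟨x, -, hx⟩ := exists_le_of_sum_le univ_nonempty hsum
  exact ⟨x, hx⟩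

theorem exists_good_card_ne_le [DecidableEq γ] {good : (ι → β) → Prop} [DecidablePred good]
    {col : (ι → β) → γ}
    (hcol : ∀ x i v, good x → good (Function.update x i v) →
      col (Function.update x i v) = col x)
    (hlt : 2 ^ Fintype.card ι * (univ.filter fun x => ¬good x).card < Fintype.card (ι → β)) :
    ∃ x₀, good x₀ ∧ (univ.filter fun y => good y → col y ≠ col x₀).card ≤
      2 ^ Fintype.card ι * (univ.filter fun x => ¬good x).card := by
  have : Nonempty (ι → β) := Fintype.card_pos_iff.1 (by omega)
  obtain ⟨x₀, hx₀⟩ := exists_card_hybrid_le good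
  have hall : ∀ y, (¬∃ s : Finset ι, ¬good (s.piecewise y x₀)) →
      ∀ s : Finset ι, good (s.piecewise y x₀) := fun y hy => by simpa using hy
  obtain ⟨y, hy⟩ : ∃ y, ¬∃ s : Finset ι, ¬good (s.piecewise y x₀) := by
    by_contra! hno
    rw [filter_true_of_mem fun y _ => hno y, card_univ] at hx₀
    omega
  refine ⟨x₀, by simpa using hall y hy ∅, (card_le_card fun z hz => ?_).trans hx₀⟩
  refine mem_filter.2 ⟨mem_univ _, ?_⟩
  by_contra hno
  have hgood := hall z hno
  exact (mem_filter.1 hz).2 (by simpa using hgood univ) (eq_of_forall_hybrid hcol hgood)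

variable [DecidableEq β]

theorem card_filter_not_injective_le :
    (univ.filter fun x : ι → β => ¬Function.Injective x).card ≤
      Fintype.card ι * Fintype.card ι * Fintype.card β ^ (Fintype.card ι - 1) := by
  have hsub : (univ.filter fun x : ι → β => ¬Function.Injective x) ⊆
      (univ : Finset (ι × ι)).biUnion
        fun z => univ.filter fun x => z.1 ≠ z.2 ∧ x z.1 = x z.2 := by
    intro x hx
    obtain ⟨a, b, hab, hne⟩ := Function.not_injective_iff.1 (mem_filter.1 hx).2
    exact mem_biUnion.2 ⟨(a, b), mem_univ _, mem_filter.2 ⟨mem_univ _, hne, hab⟩⟩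
  rw [← Fintype.card_prod, ← card_univ (α := ι × ι)]
  refine (card_le_card hsub).trans (card_biUnion_le_card_mul _ _ _ ?_)
  rintro ⟨a, b⟩ -
  calc (univ.filter fun x : ι → β => a ≠ b ∧ x a = x b).card
      ≤ (univ : Finset ({l : ι // l ≠ a} → β)).card := by
        refine card_le_card_of_injOn (fun x l => x l) (fun _ _ => mem_univ _) ?_
        intro x hx y hy hxy
        have hoff : ∀ l, l ≠ a → x l = y l := fun l hl => congrFun hxy ⟨l, hl⟩
        obtain ⟨hab, hxab⟩ := (mem_filter.1 hx).2
        have hyab := (mem_filter.1 hy).2.2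
        funext l
        obtain rfl | hl := eq_or_ne l a
        · rw [hxab, hyab, hoff b hab.symm]
        · exact hoff l hl
    _ = Fintype.card β ^ (Fintype.card ι - 1) := by simp

theorem card_filter_image_univ_eq_le (D : Finset β) :
    (univ.filter fun x : ι → β => univ.image x = D).card ≤ D.card ^ Fintype.card ι := by
  rw [← card_univ, ← prod_const, ← Fintype.card_piFinset]
  refine card_le_card fun x hx => Fintype.mem_piFinset.2 fun i => ?_
  rw [← (mem_filter.1 hx).2]
  exact mem_image_of_mem x (mem_univ i)

theorem card_filter_not_injective_or_image_mem_le (bad : Finset (Finset β)) :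
    (univ.filter fun x : ι → β => ¬(Function.Injective x ∧ univ.image x ∉ bad)).card ≤
      Fintype.card ι * Fintype.card ι * Fintype.card β ^ (Fintype.card ι - 1) +
        Fintype.card ι ^ Fintype.card ι * bad.card := by
  have hsub : (univ.filter fun x : ι → β => ¬(Function.Injective x ∧ univ.image x ∉ bad)) ⊆
      (univ.filter fun x : ι → β => ¬Function.Injective x) ∪
        (bad.filter fun D => D.card ≤ Fintype.card ι).biUnion
          fun D => univ.filter fun x : ι → β => univ.image x = D := by
    intro x hx
    by_cases hinj : Function.Injective x
    · refine mem_union_right _ (mem_biUnion.2 ⟨univ.image x, mem_filter.2 ⟨?_, ?_⟩, by simp⟩)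
      · by_contra hno
        exact (mem_filter.1 hx).2 ⟨hinj, hno⟩
      · exact card_image_le
    · exact mem_union_left _ (mem_filter.2 ⟨mem_univ _, hinj⟩)
  refine (card_le_card hsub).trans ((card_union_le _ _).trans
    (Nat.add_le_add card_filter_not_injective_le ?_))
  have hfiber : ∀ D ∈ bad.filter fun D => D.card ≤ Fintype.card ι,
      (univ.filter fun x : ι → β => univ.image x = D).card ≤ Fintype.card ι ^ Fintype.card ι :=
    fun D hD => (card_filter_image_univ_eq_le D).trans
      (Nat.pow_le_pow_left (mem_filter.1 hD).2 _)
  calc _ ≤ (bad.filter fun D => D.card ≤ Fintype.card ι).card *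
        Fintype.card ι ^ Fintype.card ι := card_biUnion_le_card_mul _ _ _ hfiber
    _ ≤ bad.card * Fintype.card ι ^ Fintype.card ι :=
        Nat.mul_le_mul_right _ (card_filter_le _ _)
    _ = Fintype.card ι ^ Fintype.card ι * bad.card := mul_comm _ _

theorem exists_notMem_card_ne_le [DecidableEq γ] {k : ℕ} (col : Finset β → γ)
    (bad : Finset (Finset β))
    (hcol : ∀ D D' : Finset β, D.card = k → D'.card = k → D ∉ bad → D' ∉ bad →
      k ≤ (D ∩ D').card + 1 → col D' = col D)
    (hlt : 2 ^ k * (k * k * Fintype.card β ^ (k - 1) + k ^ k * bad.card) <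
      Fintype.card β ^ k) :
    ∃ D₀ : Finset β, D₀.card = k ∧ D₀ ∉ bad ∧
      ((powersetCard k univ).filter fun D => D ∉ bad → col D ≠ col D₀).card ≤
        2 ^ k * (k * k * Fintype.card β ^ (k - 1) + k ^ k * bad.card) := by
  let good : (Fin k → β) → Prop := fun x => Function.Injective x ∧ univ.image x ∉ bad
  have hbad : 2 ^ k * (univ.filter fun x => ¬good x).card ≤
      2 ^ k * (k * k * Fintype.card β ^ (k - 1) + k ^ k * bad.card) := by
    simpa only [Fintype.card_fin] using Nat.mul_le_mul_left (2 ^ k)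
      (card_filter_not_injective_or_image_mem_le (ι := Fin k) bad)
  have hcolor : ∀ x i v, good x → good (Function.update x i v) →
      col (univ.image (Function.update x i v)) = col (univ.image x) := by
    intro x i v hx hy
    refine hcol _ _ ?_ ?_ hx.2 hy.2 ?_
    · simpa using card_image_univ hx.1
    · simpa using card_image_univ hy.1
    · simpa using card_le_card_inter_image_update hx.1 i v
  obtain ⟨x₀, hx₀, hcount⟩ := exists_good_card_ne_le (good := good)
    (col := fun x => col (univ.image x)) hcolor (by simpa using hbad.trans_lt hlt)
  rw [Fintype.card_fin] at hcount
  refine ⟨univ.image x₀, by simpa using card_image_univ hx₀.1, hx₀.2,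
    le_trans ?_ (hcount.trans hbad)⟩
  refine le_trans (card_le_card fun D hD => ?_) (card_image_le (f := fun x => univ.image x))
  obtain ⟨hDk, hDcol⟩ := mem_filter.1 hD
  obtain ⟨x, -, rfl⟩ := exists_injective_image_eq (mem_powersetCard.1 hDk).2
  exact mem_image.2 ⟨x, mem_filter.2 ⟨mem_univ _, fun hx => hDcol hx.2⟩, rfl⟩

end Connect

/-! ### Stability -/

section Stability

theorem mul_choose_sub_add_choose_sub_le (k : ℕ) {t n : ℕ} (h : t ≤ n) :
    t * (n - t).choose k + (n - t).choose (k + 1) ≤ n.choose (k + 1) := by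
  induction t with
  | zero => simp
  | succ t ih =>
    obtain ⟨a, ha⟩ : ∃ a, n - t = a + 1 := ⟨n - t - 1, by omega⟩
    have hstep := ih (by omega)
    rw [ha, Nat.choose_succ_succ a k] at hstep
    rw [show n - (t + 1) = a by omega]
    have := Nat.choose_le_succ a k
    nlinarith

theorem choose_le_choose_sub_add (k : ℕ) {t n : ℕ} (h : t ≤ n) :
    n.choose (k + 1) ≤ (n - t).choose (k + 1) + t * n ^ k := by
  induction t with
  | zero => simp
  | succ t ih =>
    obtain ⟨a, ha⟩ : ∃ a, n - t = a + 1 := ⟨n - t - 1, by omega⟩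
    have hstep := ih (by omega)
    rw [ha, Nat.choose_succ_succ a k] at hstep
    rw [show n - (t + 1) = a by omega]
    have hpow : a.choose k ≤ n ^ k :=
      (Nat.choose_le_pow a k).trans (Nat.pow_le_pow_left (by omega) k)
    nlinarith

theorem sum_add_card_filter_lt_le {ι : Type*} (U : Finset ι) (f : ι → ℕ) (t : ℕ) {M : ℕ}
    (hM : ∀ i, f i ≤ M) :
    ∑ i ∈ U, f i + (U.filter fun i => f i < t).card ≤
      U.card * t + M * (U.filter fun i => t < f i).card := by
  rw [card_filter, card_filter, mul_sum, card_eq_sum_ones, sum_mul, ← sum_add_distrib,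
    ← sum_add_distrib]
  refine sum_le_sum fun i _ => ?_
  have := hM i
  split_ifs <;> omega

theorem mul_error_le {k n q a c c₃ d e X : ℕ} (hX : q * X ≤ c * n ^ (k + 1))
    (hd : q * (a * d) ≤ n) (hc : q * c₃ ≤ n) :
    q * (a * (d * n ^ k + e * (X + c₃ * n ^ k))) ≤ (1 + a * e * (c + 1)) * n ^ (k + 1) :=
  calc q * (a * (d * n ^ k + e * (X + c₃ * n ^ k)))
      = q * (a * d) * n ^ k + a * e * (q * X + q * c₃ * n ^ k) := by ring
    _ ≤ n * n ^ k + a * e * (c * n ^ (k + 1) + n * n ^ k) := by gcongr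
    _ = (1 + a * e * (c + 1)) * n ^ (k + 1) := by ring

theorem mul_le_and_lt_of_mul_le {a C Y N : ℕ} (hN : 0 < N)
    (hY : ((a + 1) * C + 1) * Y ≤ C * N) : a * Y ≤ N ∧ Y < N := by
  rcases Nat.eq_zero_or_pos C with rfl | hC
  · obtain rfl : Y = 0 := by simpa using hY
    simpa using hN
  · refine ⟨Nat.le_of_mul_le_mul_left (?_ : C * (a * Y) ≤ C * N) hC, ?_⟩
    · nlinarith
    by_contra! hge
    nlinarith [Nat.mul_le_mul_left C hge, Nat.zero_le (a * C * Y)]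

theorem sized_filter_powersetCard [Fintype β] (k : ℕ) (P : Finset β → Prop)
    [DecidablePred P] :
    (((powersetCard k univ).filter P : Finset (Finset β)) : Set (Finset β)).Sized k :=
  fun _ hD => mem_powersetCard_univ.1 (mem_filter.1 hD).1

theorem card_powersetCard_le_two_pow (j : ℕ) (L : Finset β) :
    (powersetCard j L).card ≤ 2 ^ L.card :=
  (card_le_card fun _ hB => mem_powerset.2 (mem_powersetCard.1 hB).1).trans (card_powerset L).le

variable [DecidableEq β]

/-- The vertices of `L` that extend `D` to an edge of `F`. -/
def apexes (F : Finset (Finset β)) (L D : Finset β) : Finset β :=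
  L.filter fun v => v ∉ D ∧ insert v D ∈ F

/-- The `r`-sets meeting `L` that are not edges of `F`. -/
def missingEdges [Fintype β] (r : ℕ) (F : Finset (Finset β)) (L : Finset β) :
    Finset (Finset β) :=
  (powersetCard r univ).filter fun e => ¬Disjoint e L ∧ e ∉ F

theorem card_missingEdges_le_mul_card_apexes_ne [Fintype β] (F : Finset (Finset β))
    (L B : Finset β) (k : ℕ) :
    (missingEdges (k + 1) F B).card ≤
      B.card * ((powersetCard k univ).filter fun D => apexes F L D ≠ B).card := by
  rw [← card_product]
  refine le_trans (card_le_card fun e he => ?_) (card_image_le (f := fun z => insert z.1 z.2))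
  obtain ⟨hek, hmeet, heF⟩ := mem_filter.1 he
  obtain ⟨v, hve, hvB⟩ := not_disjoint_iff.1 hmeet
  refine mem_image.2 ⟨(v, e.erase v), mem_product.2 ⟨hvB, mem_filter.2 ⟨?_, ?_⟩⟩,
    insert_erase hve⟩
  · exact mem_powersetCard_univ.2
      (by rw [card_erase_of_mem hve, mem_powersetCard_univ.1 hek, Nat.add_sub_cancel])
  · rintro rfl
    have hins := (mem_filter.1 hvB).2.2
    rw [insert_erase hve] at hins
    exact heF hins

theorem card_le_card_disjoint_add_sum_apexes [Fintype β] {F : Finset (Finset β)} {k : ℕ}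
    (hF : (F : Set (Finset β)).Sized (k + 1)) (L : Finset β) :
    F.card ≤ (F.filter fun e => Disjoint e L).card +
      ∑ D ∈ powersetCard k univ, (apexes F L D).card := by
  have hsub : F ⊆ (F.filter fun e => Disjoint e L) ∪
      (powersetCard k univ).biUnion fun D => (apexes F L D).image fun v => insert v D := by
    intro e he
    by_cases hd : Disjoint e L
    · exact mem_union_left _ (mem_filter.2 ⟨he, hd⟩)
    · obtain ⟨v, hve, hvL⟩ := not_disjoint_iff.1 hd
      refine mem_union_right _ (mem_biUnion.2 ⟨e.erase v, mem_powersetCard_univ.2 ?_,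
        mem_image.2 ⟨v, mem_filter.2 ⟨hvL, notMem_erase v e, ?_⟩, insert_erase hve⟩⟩)
      · rw [card_erase_of_mem hve, hF he, Nat.add_sub_cancel]
      · rwa [insert_erase hve]
  refine (card_le_card hsub).trans ((card_union_le _ _).trans (Nat.add_le_add_left ?_ _))
  exact card_biUnion_le.trans (sum_le_sum fun D _ => card_image_le)

theorem commonLink_filter_subset_apexes (F : Finset (Finset β)) (L B : Finset β)
    (U : Finset (Finset β)) : CommonLink F B (U.filter fun D => B ⊆ apexes F L D) :=
  fun _ hD _ hv => (mem_filter.1 ((mem_filter.1 hD).2 hv)).2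

section LargeApexes

variable [Fintype β] [DecidableEq α] {F : Finset (Finset β)} {L B : Finset β}
  {T : Finset (Finset α)} {R S : Finset α} {k K : ℕ}

theorem card_filter_subset_apexes_le (hT : IsHypertree R T)
    (hTr : (T : Set (Finset α)).Sized (k + 2)) (hS : IsCrossCut T S)
    (hfree : ¬ContainsCopy F T) (hB : S.card = B.card)
    (hK : S.card + (hverts T).card ≤ K) :
    ((powersetCard (k + 1) univ).filter fun D => B ⊆ apexes F L D).card ≤
      K * Fintype.card β ^ k := by
  have hsized := sized_filter_powersetCard (k + 1) fun D => B ⊆ apexes F L D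
  refine (Full.card_le_mul_card_shadow fun G hG hfull => ?_).trans
    (Nat.mul_le_mul_left _ (card_le_pow_of_sized (k := k) hsized.shadow))
  by_contra hne
  exact hfree (containsCopy_of_commonLink hfull (hsized.mono hG) hT hTr hS hB
    (fun D hD => commonLink_filter_subset_apexes F L B _ D (hG hD))
    (nonempty_iff_ne_empty.2 hne) (hB ▸ hK))

theorem card_filter_card_lt_card_apexes_le (hT : IsHypertree R T)
    (hTr : (T : Set (Finset α)).Sized (k + 2)) (hS : IsCrossCut T S)
    (hfree : ¬ContainsCopy F T) (hK : S.card + (hverts T).card ≤ K) :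
    ((powersetCard (k + 1) univ).filter fun D => S.card ≤ (apexes F L D).card).card ≤
      2 ^ L.card * (K * Fintype.card β ^ k) := by
  have hsub : ((powersetCard (k + 1) univ).filter fun D => S.card ≤ (apexes F L D).card) ⊆
      (powersetCard S.card L).biUnion
        fun B => (powersetCard (k + 1) univ).filter fun D => B ⊆ apexes F L D := by
    intro D hD
    obtain ⟨hDk, hDS⟩ := mem_filter.1 hD
    obtain ⟨B, hB, hBS⟩ := exists_subset_card_eq hDS
    exact mem_biUnion.2 ⟨B, mem_powersetCard.2 ⟨hB.trans (filter_subset _ _), hBS⟩,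
      mem_filter.2 ⟨hDk, hB⟩⟩
  refine (card_le_card hsub).trans ((card_biUnion_le_card_mul _ _ _ fun B hB => ?_).trans
    (Nat.mul_le_mul_right _ (card_powersetCard_le_two_pow _ _)))
  exact card_filter_subset_apexes_le hT hTr hS hfree (mem_powersetCard.1 hB).2.symm hK

end LargeApexes

/-- `F` has at least as many edges as the family of all sets meeting a fixed `t`-set, so the
average number of apexes is at least about `t`; a deficit is therefore paid for by an excess. -/
theorem card_filter_card_apexes_lt_le [Fintype β] {F : Finset (Finset β)} {k t : ℕ}
    (hF : (F : Set (Finset β)).Sized (k + 2)) (L : Finset β) (ht : t ≤ Fintype.card β)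
    (hbig : (Fintype.card β).choose (k + 2) ≤
      F.card + (Fintype.card β - t).choose (k + 2)) :
    ((powersetCard (k + 1) univ).filter fun D => (apexes F L D).card < t).card ≤
      (F.filter fun e => Disjoint e L).card + t * t * Fintype.card β ^ k +
        L.card * ((powersetCard (k + 1) univ).filter fun D => t < (apexes F L D).card).card := by
  have hexcess := sum_add_card_filter_lt_le (powersetCard (k + 1) univ)
    (fun D => (apexes F L D).card) t fun D => card_le_card (filter_subset _ L)
  have hcount := card_le_card_disjoint_add_sum_apexes hF L
  have havg : (powersetCard (k + 1) (univ : Finset β)).card * t ≤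
      F.card + t * t * Fintype.card β ^ k := by
    rw [card_powersetCard, card_univ]
    have hlower := mul_choose_sub_add_choose_sub_le (k + 1) ht
    have hupper := choose_le_choose_sub_add k ht
    nlinarith
  omega

section GoodLink

/-- `D` has exactly `t` apexes and lies in a full family of `k`-sets all of which have these
apexes in common. -/
def GoodLink (K k t : ℕ) (F : Finset (Finset β)) (L D : Finset β) : Prop :=
  (apexes F L D).card = t ∧ ∃ G, Full K G ∧ (G : Set (Finset β)).Sized k ∧
    CommonLink F (apexes F L D) G ∧ D ∈ G

variable [Fintype β] {F : Finset (Finset β)} {L : Finset β} {k t K : ℕ}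

theorem card_filter_apexes_eq_not_goodLink_le (B : Finset β) (hB : B.card = t) :
    ((powersetCard (k + 1) univ).filter fun D =>
      apexes F L D = B ∧ ¬GoodLink K (k + 1) t F L D).card ≤ K * Fintype.card β ^ k := by
  have hsized := sized_filter_powersetCard (k + 1) fun D => apexes F L D = B
  obtain ⟨G, hG, hfull, hcard⟩ :=
    exists_full_subfamily K ((powersetCard (k + 1) univ).filter fun D => apexes F L D = B)
  refine le_trans (card_le_card fun D hD => ?_) (hcard.trans (Nat.mul_le_mul_left _
    ((card_le_card sdiff_subset).trans (card_le_pow_of_sized (k := k) hsized.shadow))))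
  obtain ⟨hDk, hDB, hbad⟩ := mem_filter.1 hD
  refine mem_sdiff.2 ⟨mem_filter.2 ⟨hDk, hDB⟩, fun hDG => ?_⟩
  refine hbad ⟨hDB ▸ hB, G, hfull, hsized.mono hG, fun D' hD' v hv => ?_, hDG⟩
  rw [hDB, ← (mem_filter.1 (hG hD')).2] at hv
  exact (mem_filter.1 hv).2

theorem card_filter_not_goodLink_le :
    ((powersetCard (k + 1) univ).filter fun D => ¬GoodLink K (k + 1) t F L D).card ≤
      ((powersetCard (k + 1) univ).filter fun D => (apexes F L D).card < t).card +
        ((powersetCard (k + 1) univ).filter fun D => t < (apexes F L D).card).card +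
          2 ^ L.card * (K * Fintype.card β ^ k) := by
  have hsub : ((powersetCard (k + 1) univ).filter fun D => ¬GoodLink K (k + 1) t F L D) ⊆
      (((powersetCard (k + 1) univ).filter fun D => (apexes F L D).card < t) ∪
        (powersetCard (k + 1) univ).filter fun D => t < (apexes F L D).card) ∪
      (powersetCard t L).biUnion fun B => (powersetCard (k + 1) univ).filter fun D =>
        apexes F L D = B ∧ ¬GoodLink K (k + 1) t F L D := by
    intro D hD
    obtain ⟨hDk, hbad⟩ := mem_filter.1 hD
    rcases lt_trichotomy (apexes F L D).card t with hlt | heq | hgt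
    · exact mem_union_left _ (mem_union_left _ (mem_filter.2 ⟨hDk, hlt⟩))
    · exact mem_union_right _ (mem_biUnion.2 ⟨apexes F L D, mem_powersetCard.2
        ⟨filter_subset _ _, heq⟩, mem_filter.2 ⟨hDk, rfl, hbad⟩⟩)
    · exact mem_union_left _ (mem_union_right _ (mem_filter.2 ⟨hDk, hgt⟩))
  refine (card_le_card hsub).trans ((card_union_le _ _).trans
    (Nat.add_le_add (card_union_le _ _) ?_))
  refine (card_biUnion_le_card_mul _ _ _ fun B hB => ?_).trans
    (Nat.mul_le_mul_right _ (card_powersetCard_le_two_pow _ _))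
  exact card_filter_apexes_eq_not_goodLink_le B (mem_powersetCard.1 hB).2

end GoodLink

namespace StarAttachment

variable [DecidableEq α] [Fintype β] {F : Finset (Finset β)} {L D D' : Finset β}
  {H : Finset (Finset α)} {S A : Finset α} {w : α} {k t K : ℕ}

omit [Fintype β] in
theorem apexes_eq_of_goodLink (h : StarAttachment (k + 2) t H S A w)
    (hfree : ¬ContainsCopy F H) (hD : GoodLink K (k + 1) t F L D)
    (hD' : GoodLink K (k + 1) t F L D') (hcard : 2 ≤ (D ∩ D').card)
    (hK : t + 2 * (hverts H).card ≤ K) : apexes F L D = apexes F L D' := by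
  obtain ⟨ht, G, hfull, hG, hlink, hDG⟩ := hD
  obtain ⟨ht', G', hfull', hG', hlink', hDG'⟩ := hD'
  by_contra hne
  exact hfree (h.containsCopy_of_two_commonLinks hfull hG ht hlink hfull' hG' ht' hlink'
    hne hDG hDG' hcard hK)

theorem exists_card_missingEdges_le (h : StarAttachment (k + 2) t H S A w)
    (hfree : ¬ContainsCopy F H) (hK : t + 2 * (hverts H).card ≤ K) {b : ℕ}
    (hb : ((powersetCard (k + 1) univ).filter
      fun D => ¬GoodLink K (k + 1) t F L D).card ≤ b)
    (hlt : 2 ^ (k + 1) * ((k + 1) * (k + 1) * Fintype.card β ^ k + (k + 1) ^ (k + 1) * b) <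
      Fintype.card β ^ (k + 1)) :
    ∃ B : Finset β, B.card = t ∧
      (missingEdges (k + 2) F B).card ≤
        t * (2 ^ (k + 1) *
          ((k + 1) * (k + 1) * Fintype.card β ^ k + (k + 1) ^ (k + 1) * b)) := by
  have hgood : ∀ D : Finset β, D.card = k + 1 →
      D ∉ ((powersetCard (k + 1) univ).filter fun D => ¬GoodLink K (k + 1) t F L D) →
      GoodLink K (k + 1) t F L D := fun D hDk hD => by
    by_contra hno
    exact hD (mem_filter.2 ⟨mem_powersetCard_univ.2 hDk, hno⟩)
  have hbound := Nat.mul_le_mul_left (2 ^ (k + 1)) (Nat.add_le_add_left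
    (Nat.mul_le_mul_left ((k + 1) ^ (k + 1)) hb) ((k + 1) * (k + 1) * Fintype.card β ^ k))
  have hk := h.four_le
  obtain ⟨D₀, hD₀k, hD₀, hcount⟩ := exists_notMem_card_ne_le (k := k + 1) (apexes F L) _
    (fun D D' hDk hD'k hD hD' hinter => (h.apexes_eq_of_goodLink hfree (hgood D hDk hD)
      (hgood D' hD'k hD') (by omega) hK).symm) (hbound.trans_lt hlt)
  have hB := (hgood D₀ hD₀k hD₀).1
  refine ⟨apexes F L D₀, hB, (card_missingEdges_le_mul_card_apexes_ne F L _ (k + 1)).trans ?_⟩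
  rw [hB]
  refine Nat.mul_le_mul_left _ ((card_le_card ?_).trans (hcount.trans hbound))
  exact fun D hD => mem_filter.2 ⟨(mem_filter.1 hD).1, fun _ => (mem_filter.1 hD).2⟩

theorem card_not_goodLink_le (h : StarAttachment (k + 2) t H S A w)
    (hF : (F : Set (Finset β)).Sized (k + 2)) (hfree : ¬ContainsCopy F H)
    (ht : t ≤ Fintype.card β) (hbig : (Fintype.card β).choose (k + 2) ≤
      F.card + (Fintype.card β - t).choose (k + 2))
    (hK : t + 1 + (hverts H).card ≤ K) :
    ((powersetCard (k + 1) univ).filter fun D => ¬GoodLink K (k + 1) t F L D).card ≤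
      (F.filter fun e => Disjoint e L).card +
        (t * t + (L.card + 2) * (2 ^ L.card * K)) * Fintype.card β ^ k := by
  obtain ⟨B, hB, -⟩ := h.exists_mem
  have hlarge := card_filter_card_lt_card_apexes_le (F := F) (L := L) (h.hypertree B hB)
    h.sized h.crossCut hfree (h.card_crossCut ▸ hK)
  rw [h.card_crossCut] at hlarge
  have hsmall := card_filter_card_apexes_lt_le hF L ht hbig
  have hexcess := Nat.mul_le_mul_left L.card hlarge
  have hbad := card_filter_not_goodLink_le (F := F) (L := L) (k := k) (t := t) (K := K)
  simp only [Nat.succ_le_iff] at hlarge hexcess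
  linarith

theorem exists_forall_card_missingEdges_le {r : ℕ} (h : StarAttachment r t H S A w) (q : ℕ) :
    ∃ n₀ : ℕ, ∀ n, n₀ ≤ n → ∀ F : Finset (Finset (Fin n)),
      (F : Set (Finset (Fin n))).Sized r → ¬ContainsCopy F H →
      n.choose r ≤ F.card + (n - t).choose r →
      ∃ L : Finset (Fin n), L.card = t ∧
        q * (missingEdges r F L).card ≤ n ^ (r - 1) := by
  obtain ⟨k, rfl⟩ : ∃ k, r = k + 2 := ⟨r - 2, by have := h.four_le; omega⟩
  obtain ⟨B, hB, -⟩ := h.exists_mem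
  let s := (hverts H).card
  let K := t + 1 + 2 * s
  let C := 1 + 2 ^ (k + 1) * (k + 1) ^ (k + 1) * (2 * s + 1 + 1)
  let q₀ := (q * t + 1) * C + 1
  let c₃ := t * t + (2 * s * q₀ + 2) * (2 ^ (2 * s * q₀) * K)
  let d := (k + 1) * (k + 1)
  refine ⟨1 + t + q₀ * ((k + 2) * (k + 2) * s * ((k + 2) * (k + 2) * s) + s * s) + q₀ * c₃ +
    q₀ * (2 ^ (k + 1) * d), fun n hn F hF hfree hbig => ?_⟩
  have : Nonempty (Fin n) := ⟨⟨0, by omega⟩⟩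
  obtain ⟨L, hL, hX⟩ := exists_small_heavy_set (q := q₀) (s := s) (h.hypertree B hB) h.sized
    h.four_le h.reducible hF hfree le_rfl (by rw [Fintype.card_fin]; omega)
  have hbad : ((powersetCard (k + 1) univ).filter fun D => ¬GoodLink K (k + 1) t F L D).card ≤
      (F.filter fun e => Disjoint e L).card + c₃ * Fintype.card (Fin n) ^ k := by
    refine (h.card_not_goodLink_le hF hfree (by rw [Fintype.card_fin]; omega)
      (by rwa [Fintype.card_fin]) (by omega)).trans ?_
    gcongr
    change _ ≤ t * t + (2 * s * q₀ + 2) * (2 ^ (2 * s * q₀) * K)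
    gcongr
    exact one_le_two
  obtain ⟨hsmall, hlt⟩ := mul_le_and_lt_of_mul_le
    (pow_pos Fintype.card_pos (k + 1)) (mul_error_le (e := (k + 1) ^ (k + 1)) hX
      (show q₀ * (2 ^ (k + 1) * d) ≤ _ by rw [Fintype.card_fin]; omega)
      (show q₀ * c₃ ≤ _ by rw [Fintype.card_fin]; omega))
  obtain ⟨B, hB, hM⟩ := h.exists_card_missingEdges_le hfree (by omega) hbad hlt
  refine ⟨B, hB, (Nat.mul_le_mul_left q hM).trans ?_⟩
  rw [Fintype.card_fin] at hsmall
  rwa [Fintype.card_fin, ← mul_assoc]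

end StarAttachment

end Stability

/-! ### Linear stars -/

section LinearStar

variable [DecidableEq α] [DecidableEq β] {r p : ℕ} {𝒮 : Finset (Finset α)} {w : α}

/-- `IsLinearStar r p 𝒮 w`: the family `𝒮` is an `r`-uniform linear star with `p` petals and
kernel `{w}`. -/
structure IsLinearStar (r p : ℕ) (𝒮 : Finset (Finset α)) (w : α) : Prop where
  card_eq : 𝒮.card = p
  sized : (𝒮 : Set (Finset α)).Sized r
  mem : ∀ B ∈ 𝒮, w ∈ B
  inter : ∀ B ∈ 𝒮, ∀ C ∈ 𝒮, B ≠ C → B ∩ C = {w}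

namespace IsLinearStar

theorem eq_of_mem (h : IsLinearStar r p 𝒮 w) {B C : Finset α} (hB : B ∈ 𝒮) (hC : C ∈ 𝒮)
    (hBC : B ≠ C) {x : α} (hxB : x ∈ B) (hxC : x ∈ C) : x = w :=
  mem_singleton.1 (h.inter B hB C hC hBC ▸ mem_inter.2 ⟨hxB, hxC⟩)

theorem image (h : IsLinearStar r p 𝒮 w) {f : α → β} (hf : Set.InjOn f (hverts 𝒮)) :
    IsLinearStar r p (𝒮.image (Finset.image f)) (f w) := by
  have hfB : ∀ B ∈ 𝒮, Set.InjOn f B := fun B hB => hf.mono (subset_hverts hB)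
  have himage : Set.InjOn (Finset.image f) (𝒮 : Set (Finset α)) := fun B hB C hC hBC => by
    rwa [image_eq_image_iff_of_injOn hf (subset_hverts hB) (subset_hverts hC)] at hBC
  refine ⟨(card_image_of_injOn himage).trans h.card_eq, fun e he => ?_, fun e he => ?_,
    fun e he e' he' hne => ?_⟩
  · obtain ⟨B, hB, rfl⟩ := mem_image.1 he
    rw [card_image_of_injOn (hfB B hB), h.sized hB]
  · obtain ⟨B, hB, rfl⟩ := mem_image.1 he
    exact mem_image_of_mem f (h.mem B hB)
  · obtain ⟨B, hB, rfl⟩ := mem_image.1 he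
    obtain ⟨C, hC, rfl⟩ := mem_image.1 he'
    rw [← image_inter_of_injOn B C
      (hf.mono (Set.union_subset (subset_hverts hB) (subset_hverts hC))),
      h.inter B hB C hC (ne_of_apply_ne _ hne), image_singleton]

theorem exists_injOn_glue (h : IsLinearStar r p 𝒮 w) {p' : ℕ} {𝒯 : Finset (Finset β)} {κ : β}
    (h' : IsLinearStar r p' 𝒯 κ) {f : Finset α → α → β} (hf : ∀ B ∈ 𝒮, Set.InjOn (f B) B)
    (hfw : ∀ B ∈ 𝒮, f B w = κ) (hf𝒯 : ∀ B ∈ 𝒮, B.image (f B) ∈ 𝒯)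
    (hne : ∀ B ∈ 𝒮, ∀ C ∈ 𝒮, B ≠ C → B.image (f B) ≠ C.image (f C)) :
    ∃ φ : α → β, Set.InjOn φ (hverts 𝒮) ∧ ∀ B ∈ 𝒮, Set.EqOn φ (f B) B := by
  choose! edge hedge hmem_edge using fun x (hx : x ∈ hverts 𝒮) => mem_hverts.1 hx
  have hagree : ∀ B ∈ 𝒮, Set.EqOn (fun x => f (edge x) x) (f B) B := fun B hB x hx => by
    have hx𝒮 := subset_hverts hB hx
    obtain heq | hne := eq_or_ne (edge x) B
    · exact congrArg (f · x) heq
    · obtain rfl := h.eq_of_mem (hedge x hx𝒮) hB hne (hmem_edge x hx𝒮) hx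
      exact (hfw _ (hedge x hx𝒮)).trans (hfw B hB).symm
  have heq_w : ∀ B ∈ 𝒮, ∀ x ∈ B, f B x = κ → x = w := fun B hB x hx hxκ =>
    hf B hB hx (h.mem B hB) (hxκ.trans (hfw B hB).symm)
  refine ⟨fun x => f (edge x) x, fun x hx y hy hxy => ?_, hagree⟩
  obtain ⟨B, hB, hxB⟩ := mem_hverts.1 hx
  obtain ⟨C, hC, hyC⟩ := mem_hverts.1 hy
  replace hxy : f B x = f C y := (hagree B hB hxB).symm.trans (hxy.trans (hagree C hC hyC))
  obtain rfl | hBC := eq_or_ne B C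
  · exact hf B hB hxB hyC hxy
  · have hxκ : f B x = κ := h'.eq_of_mem (hf𝒯 B hB) (hf𝒯 C hC) (hne B hB C hC hBC)
      (mem_image_of_mem _ hxB) (hxy ▸ mem_image_of_mem _ hyC)
    rw [heq_w B hB x hxB hxκ, heq_w C hC y hyC (hxy ▸ hxκ)]

/-- Edge by edge, `g` on `B ∩ I` extends to a bijection from `B` onto its target edge; these
bijections agree wherever two edges meet, since they all send `w` to `κ`. -/
theorem exists_map (h : IsLinearStar r p 𝒮 w) {𝒯 : Finset (Finset β)} {κ : β}
    (h' : IsLinearStar r p 𝒯 κ) {B₀ I : Finset α} {e₀ : Finset β} (hB₀ : B₀ ∈ 𝒮) (he₀ : e₀ ∈ 𝒯)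
    (hI : I ⊆ B₀) (hwI : w ∈ I) {g : α → β} (hg : Set.InjOn g I) (hgI : I.image g ⊆ e₀)
    (hgw : g w = κ) :
    ∃ f : α → β, Set.EqOn f g I ∧ Set.InjOn f (hverts 𝒮) ∧ ∀ B ∈ 𝒮, B.image f ∈ 𝒯 := by
  obtain ⟨π, hπB₀, hπ, hπ𝒮⟩ := exists_injOn_extend_image_eq (singleton_subset_iff.2 hB₀)
    (h.card_eq.trans h'.card_eq.symm) (g := fun _ => e₀) (by simp) (by simpa using he₀)
  have hπmem : ∀ B ∈ 𝒮, π B ∈ 𝒯 := fun B hB => hπ𝒮 ▸ mem_image_of_mem π hB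
  have hlocal : ∀ B ∈ 𝒮, ∃ f : α → β,
      Set.EqOn f g (B ∩ I : Finset α) ∧ Set.InjOn f B ∧ B.image f = π B := fun B hB => by
    refine exists_injOn_extend_image_eq inter_subset_left
      ((h.sized hB).trans (h'.sized (hπmem B hB)).symm) (hg.mono (by simp))
      (image_subset_iff.2 fun x hx => ?_)
    obtain ⟨hxB, hxI⟩ := mem_inter.1 hx
    obtain rfl | hne := eq_or_ne B B₀
    · rw [hπB₀ (mem_singleton_self B)]
      exact hgI (mem_image_of_mem g hxI)
    · rw [h.eq_of_mem hB hB₀ hne hxB (hI hxI), hgw]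
      exact h'.mem _ (hπmem B hB)
  have : Nonempty β := ⟨κ⟩
  choose! f hfg hf hfπ using hlocal
  obtain ⟨φ, hφ, hφf⟩ := h.exists_injOn_glue h' hf
    (fun B hB => (hfg B hB (mem_inter.2 ⟨h.mem B hB, hwI⟩)).trans hgw)
    (fun B hB => (hfπ B hB).symm ▸ hπmem B hB)
    (fun B hB C hC hBC => by rw [hfπ B hB, hfπ C hC]; exact hπ.ne hB hC hBC)
  refine ⟨φ, fun x hx => ?_, hφ, fun B hB => ?_⟩
  · exact (hφf B₀ hB₀ (hI hx)).trans (hfg B₀ hB₀ (mem_inter.2 ⟨hI hx, hx⟩))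
  · rw [image_congr (hφf B hB), hfπ B hB]
    exact hπmem B hB

theorem of_card_eq_one (h : IsLinearStar r 1 𝒮 w) {e : Finset α} (he : e ∈ 𝒮) {x : α}
    (hx : x ∈ e) : IsLinearStar r 1 𝒮 x := by
  have heq : ∀ B ∈ 𝒮, B = e := fun B hB => card_le_one.1 h.card_eq.le B hB e he
  exact ⟨h.card_eq, h.sized, fun B hB => heq B hB ▸ hx,
    fun B hB C hC hne => absurd ((heq B hB).trans (heq C hC).symm) hne⟩

/-- If there is a single petal, any of its vertices can serve as the kernel. -/
theorem exists_kernel_notMem (h : IsLinearStar r p 𝒮 w) (hr : 3 ≤ r) {e P : Finset α} {a : ℕ}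
    (he : e ∈ 𝒮) (hPe : P ⊆ e) (hP : P.card = 2) (ha : a ≤ 2) (hpa : 2 ≤ p → a ≤ 1) :
    ∃ x Q, IsLinearStar r p 𝒮 x ∧ Q ⊆ P ∧ x ∉ Q ∧ Q.card = a := by
  by_cases hp : 2 ≤ p
  · obtain ⟨Q, hQ, hQa⟩ := exists_subset_card_eq (s := P.erase w) (n := a) <| by
      have := pred_card_le_card_erase (s := P) (a := w)
      have := hpa hp
      omega
    exact ⟨w, Q, h, hQ.trans (erase_subset w P), fun hwQ => notMem_erase w P (hQ hwQ), hQa⟩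
  · have hp1 : p = 1 := by
      have := h.card_eq ▸ card_pos.2 ⟨e, he⟩
      omega
    subst hp1
    obtain ⟨x, hx⟩ : (e \ P).Nonempty := by
      rw [← card_pos, card_sdiff_of_subset hPe, h.sized he]
      omega
    obtain ⟨hxe, hxP⟩ := mem_sdiff.1 hx
    obtain ⟨Q, hQ, hQa⟩ := exists_subset_card_eq (ha.trans hP.ge)
    exact ⟨x, Q, h.of_card_eq_one he hxe, hQ, fun hxQ => hxP (hQ hxQ), hQa⟩

end IsLinearStar

theorem isLinearStar_linearStar (hr : 2 ≤ r) (p : ℕ) :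
    IsLinearStar r p (linearStar r p) 0 := by
  set petal : ℕ → Finset ℕ := fun i =>
    insert 0 ((range (r - 1)).image fun j => i * (r - 1) + j + 1) with hpetal
  have hcard : ∀ i, (petal i).card = r := fun i => by
    rw [hpetal, card_insert_of_notMem (by simp), card_image_of_injective _ fun a b h => by omega,
      card_range]
    omega
  have hmem : ∀ i, 0 ∈ petal i := fun i => mem_insert_self _ _
  have hdiv : ∀ i x, x ∈ petal i → x ≠ 0 → (x - 1) / (r - 1) = i := fun i x hx hx0 => by
    obtain ⟨j, hj, rfl⟩ := mem_image.1 (mem_of_mem_insert_of_ne hx hx0)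
    rw [Nat.add_sub_cancel, mul_comm, Nat.mul_add_div (by omega),
      Nat.div_eq_of_lt (mem_range.1 hj), add_zero]
  have hinter : ∀ i j, i ≠ j → petal i ∩ petal j = {0} := fun i j hij => by
    refine Subset.antisymm (fun x hx => ?_) (by simp [hmem])
    obtain ⟨hxi, hxj⟩ := mem_inter.1 hx
    by_contra hx0
    rw [mem_singleton] at hx0
    exact hij ((hdiv i x hxi hx0).symm.trans (hdiv j x hxj hx0))
  have hinj : Function.Injective petal := fun i j hij => by
    by_contra hne
    have h := hinter i j hne
    rw [hij, inter_self] at h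
    have := hcard j
    rw [h, card_singleton] at this
    omega
  refine ⟨(card_image_of_injective _ hinj).trans (card_range p), fun B hB => ?_, fun B hB => ?_,
    fun B hB C hC hne => ?_⟩
  · obtain ⟨i, -, rfl⟩ := mem_image.1 hB
    exact hcard i
  · obtain ⟨i, -, rfl⟩ := mem_image.1 hB
    exact hmem i
  · obtain ⟨i, -, rfl⟩ := mem_image.1 hB
    obtain ⟨j, -, rfl⟩ := mem_image.1 hC
    exact hinter i j (ne_of_apply_ne petal hne)

theorem exists_isLinearStar_of_containsCopy (hr : 2 ≤ r) {F : Finset (Finset β)}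
    (h : ContainsCopy F (linearStar r p)) : ∃ 𝒯 ⊆ F, ∃ κ, IsLinearStar r p 𝒯 κ := by
  obtain ⟨f, hf, hfF⟩ := h
  exact ⟨_, image_subset_iff.2 hfF, f 0, (isLinearStar_linearStar hr p).image hf⟩

theorem IsLinearStar.containsCopy_of_containsCopy_linearStar (h : IsLinearStar r p 𝒮 w)
    (hr : 2 ≤ r) {F : Finset (Finset β)} (hF : ContainsCopy F (linearStar r p)) :
    ContainsCopy F 𝒮 := by
  obtain ⟨𝒯, h𝒯F, κ, h𝒯⟩ := exists_isLinearStar_of_containsCopy hr hF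
  obtain rfl | ⟨B₀, hB₀⟩ := 𝒮.eq_empty_or_nonempty
  · exact ⟨fun _ => κ, by simp, by simp⟩
  obtain ⟨e₀, he₀⟩ : 𝒯.Nonempty := by
    rw [← card_pos, h𝒯.card_eq, ← h.card_eq]
    exact card_pos.2 ⟨B₀, hB₀⟩
  obtain ⟨f, -, hf, hf𝒯⟩ := h.exists_map h𝒯 hB₀ he₀ (I := {w}) (g := fun _ => κ)
    (singleton_subset_iff.2 (h.mem B₀ hB₀)) (mem_singleton_self w) (by simp)
    (by simpa using h𝒯.mem e₀ he₀) rfl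
  exact ⟨f, hf, fun B hB => h𝒯F (hf𝒯 B hB)⟩

namespace StarAttachment

variable {t K : ℕ} {H : Finset (Finset α)} {S A : Finset α} {F F' G : Finset (Finset β)}
  {L : Finset β}

theorem isLinearStar (h : StarAttachment r t H S A w)
    (hp : (H.filter (w ∈ ·)).card = p) : IsLinearStar r p (H.filter (w ∈ ·)) w where
  card_eq := hp
  sized _ hB := h.sized (mem_filter.1 hB).1
  mem _ hB := (mem_filter.1 hB).2
  inter B hB C hC := h.star B (mem_filter.1 hB).1 C (mem_filter.1 hC).1 (mem_filter.1 hB).2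
    (mem_filter.1 hC).2

/-- A linear star in `F'`, attached to the full family through the covered pair of one of its edges,
would extend to a copy of `H`. -/
theorem not_containsCopy_linearStar (h : StarAttachment r t H S A w)
    (hp : (H.filter (w ∈ ·)).card = p) (hG : Full K G)
    (hGr : (G : Set (Finset β)).Sized (r - 1)) (hL : L.card = t) (hGL : CommonLink F L G)
    (hK : t + 2 * (hverts H).card ≤ K) (hF'F : F' ⊆ F) (hF'L : ∀ e ∈ F', Disjoint e L)
    (hpair : ∀ e ∈ F', ∃ P ⊆ e, P.card = 2 ∧ ∃ D ∈ G, P ⊆ D) (hfree : ¬ContainsCopy F H) :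
    ¬ContainsCopy F' (linearStar r p) := by
  intro hcopy
  have hr := h.four_le
  obtain ⟨𝒯, h𝒯F', κ₀, h𝒯₀⟩ := exists_isLinearStar_of_containsCopy (by omega) hcopy
  obtain ⟨B₀, hB₀, hwB₀, hAB₀⟩ := h.exists_mem
  have hB₀' : B₀ ∈ H.filter (w ∈ ·) := mem_filter.2 ⟨hB₀, hwB₀⟩
  obtain ⟨e, he⟩ : 𝒯.Nonempty := by
    rw [← card_pos, h𝒯₀.card_eq, ← hp]
    exact card_pos.2 ⟨B₀, hB₀'⟩
  obtain ⟨P, hPe, hP, D, hD, hPD⟩ := hpair e (h𝒯F' he)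
  obtain ⟨κ, Q, h𝒯, hQP, hκQ, hQA⟩ := h𝒯₀.exists_kernel_notMem (by omega) he hPe hP
    h.card_le_two fun hp2 => h.card_le_one (hp2.trans_eq hp.symm)
  have hwA : w ∉ A := fun hwA => h.notMem_crossCut hwA h.mem_crossCut
  obtain ⟨g, hgw, hg, hgQ⟩ := exists_injOn_extend_image_eq (I := {w}) (E := insert w A)
    (D := insert κ Q) (g := fun _ => κ) (by simp)
    (by rw [card_insert_of_notMem hwA, card_insert_of_notMem hκQ, hQA]) (by simp) (by simp)
  replace hgw : g w = κ := hgw (mem_singleton_self w)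
  have hgA : A.image g = Q := by
    rw [← erase_insert hwA, ← sdiff_singleton_eq_erase, ← erase_insert hκQ, ← hgQ]
    ext y
    simp only [mem_image, mem_erase, mem_sdiff, mem_singleton]
    have := fun x hx => hg (x₁ := x) (x₂ := w) hx (mem_insert_self w A)
    grind
  obtain ⟨f, hfg, hf, hf𝒯⟩ := (h.isLinearStar hp).exists_map h𝒯 hB₀' he
    (insert_subset hwB₀ hAB₀) (mem_insert_self w A) hg
    (hgQ ▸ insert_subset (h𝒯.mem e he) (hQP.trans hPe)) hgw
  refine hfree (h.containsCopy_of_star hG hGr hL hGL hK hf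
    (fun B hB hwB => hF'F (h𝒯F' (hf𝒯 B (mem_filter.2 ⟨hB, hwB⟩)))) (fun x hx => ?_) hD ?_)
  · obtain ⟨B, hB, hxB⟩ := mem_hverts.1 hx
    exact disjoint_left.1 (hF'L _ (h𝒯F' (hf𝒯 B hB))) (mem_image_of_mem f hxB)
  · rw [image_congr (hfg.mono (subset_insert w A)), hgA]
    exact hQP.trans hPD

end StarAttachment

end LinearStar

/-! ### Turán numbers -/

section TuranNumber

variable [DecidableEq α] {n r : ℕ} {H : Finset (Finset α)}

theorem le_exNum {F : Finset (Finset (Fin n))} (hF : (F : Set (Finset (Fin n))).Sized r)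
    (hfree : ¬ContainsCopy F H) : F.card ≤ exNum n r H := by
  refine le_csSup ⟨Fintype.card (Finset (Fin n)), ?_⟩ ⟨F, fun e he => hF he, hfree, rfl⟩
  rintro N ⟨F', -, -, rfl⟩
  exact card_le_univ F'

theorem exNum_le {N : ℕ} (h : ∀ F : Finset (Finset (Fin n)),
    (F : Set (Finset (Fin n))).Sized r → ¬ContainsCopy F H → F.card ≤ N) : exNum n r H ≤ N := by
  refine csSup_le' ?_
  rintro _ ⟨F, hF, hfree, rfl⟩
  exact h F (fun e he => hF e he) hfree

theorem ContainsCopy.of_image_mem {γ : Type*} [DecidableEq β] [DecidableEq γ]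
    {F : Finset (Finset β)} {G : Finset (Finset γ)} {φ : β → γ} (hφ : Function.Injective φ)
    (hFG : ∀ e ∈ F, e.image φ ∈ G) (h : ContainsCopy F H) : ContainsCopy G H := by
  obtain ⟨f, hf, hfF⟩ := h
  refine ⟨φ ∘ f, hφ.comp_injOn hf, fun B hB => ?_⟩
  rw [← image_image]
  exact hFG _ (hfF B hB)

theorem card_le_exNum_of_subset [DecidableEq β] {Y : Finset β} {F : Finset (Finset β)}
    (hF : (F : Set (Finset β)).Sized r) (hFY : ∀ e ∈ F, e ⊆ Y) (hfree : ¬ContainsCopy F H) :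
    F.card ≤ exNum Y.card r H := by
  set φ : Fin Y.card → β := fun i => Y.equivFin.symm i
  have hφ : Function.Injective φ := Subtype.val_injective.comp Y.equivFin.symm.injective
  set F' : Finset (Finset (Fin Y.card)) := univ.filter fun e => e.image φ ∈ F
  have hF' : F ⊆ F'.image (Finset.image φ) := fun e he => by
    have hpre : (e.preimage φ hφ.injOn).image φ = e := by
      refine (image_preimage φ e hφ.injOn).trans (filter_true_of_mem fun y hy => ?_)
      exact ⟨Y.equivFin ⟨y, hFY e he hy⟩, by simp [φ]⟩
    exact mem_image.2 ⟨_, mem_filter.2 ⟨mem_univ _, hpre.symm ▸ he⟩, hpre⟩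
  refine (card_le_card hF').trans (card_image_le.trans (le_exNum (fun e he => ?_) fun hcopy => ?_))
  · rw [← card_image_of_injective e hφ, hF (mem_filter.1 he).2]
  · exact hfree (hcopy.of_image_mem hφ fun e he => (mem_filter.1 he).2)

end TuranNumber

/-! ### The exact bound -/

section Supersets

variable {k n : ℕ}

theorem pow_le_mul_choose_sub {s : ℕ} (h : 2 * (s + k) ≤ n) :
    n ^ k ≤ 2 ^ k * k.factorial * (n - s).choose k := by
  calc n ^ k ≤ (2 * (n - s + 1 - k)) ^ k := Nat.pow_le_pow_left (by omega) k
    _ = 2 ^ k * (n - s + 1 - k) ^ k := mul_pow _ _ _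
    _ ≤ 2 ^ k * (n - s).descFactorial k :=
        Nat.mul_le_mul_left _ (Nat.pow_sub_le_descFactorial (n - s) k)
    _ = 2 ^ k * k.factorial * (n - s).choose k := by
        rw [Nat.descFactorial_eq_factorial_mul_choose, mul_assoc]

variable [DecidableEq β] {Y : Finset β} {a b K : ℕ} {T U 𝒟 G : Finset (Finset β)}

theorem choose_le_card_filter_superset {Q : Finset β} (hQ : Q ⊆ Y) (a : ℕ) :
    (Y.card - Q.card).choose a ≤ ((powersetCard (Q.card + a) Y).filter (Q ⊆ ·)).card := by
  rw [← card_sdiff_of_subset hQ, ← card_powersetCard]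
  have hdisj : ∀ T ∈ powersetCard a (Y \ Q), Disjoint Q T := fun T hT =>
    disjoint_of_subset_right (mem_powersetCard.1 hT).1 disjoint_sdiff
  refine card_le_card_of_injOn (Q ∪ ·) (fun T hT => ?_) fun T hT T' hT' heq => ?_
  · obtain ⟨hTY, hTa⟩ := mem_powersetCard.1 hT
    refine mem_filter.2 ⟨mem_powersetCard.2 ⟨union_subset hQ (hTY.trans sdiff_subset), ?_⟩,
      subset_union_left⟩
    rw [card_union_of_disjoint (hdisj T hT), hTa]
  · rw [← union_sdiff_cancel_left (hdisj T hT), ← union_sdiff_cancel_left (hdisj T' hT')]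
    exact congrArg (· \ Q) heq

omit [DecidableEq β] in
theorem card_mul_choose_le_of_superset_mem (hT : ∀ Q ∈ T, Q ⊆ Y ∧ Q.card = b)
    (hU : (U : Set (Finset β)).Sized (b + a))
    (hTU : ∀ Q ∈ T, ∀ D ⊆ Y, D.card = b + a → Q ⊆ D → D ∈ U) :
    T.card * (Y.card - b).choose a ≤ U.card * (b + a).choose b := by
  classical
  refine card_mul_le_card_mul (· ⊆ ·) (fun Q hQ => ?_) fun D hD => ?_
  · obtain ⟨hQY, rfl⟩ := hT Q hQ
    refine (choose_le_card_filter_superset hQY a).trans (card_le_card fun D hD => ?_)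
    obtain ⟨hDY, hQD⟩ := mem_filter.1 hD
    obtain ⟨hDY, hDcard⟩ := mem_powersetCard.1 hDY
    exact mem_filter.2 ⟨hTU Q hQ D hDY hDcard hQD, hQD⟩
  · rw [← hU hD, ← card_powersetCard b D]
    refine card_le_card fun Q hQ => ?_
    obtain ⟨hQT, hQD⟩ := mem_filter.1 hQ
    exact mem_powersetCard.2 ⟨hQD, (hT Q hQT).2⟩

theorem exists_full_subfamily_of_subset_powersetCard (h𝒟 : 𝒟 ⊆ powersetCard (k + 1) Y)
    (hK : 2 * K * (k + 1) + k ≤ Y.card) :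
    ∃ G ⊆ 𝒟, Full K G ∧
      (powersetCard (k + 1) Y \ G).card ≤ 2 * (powersetCard (k + 1) Y \ 𝒟).card := by
  obtain ⟨G, hG𝒟, hG, hcard⟩ := exists_full_subfamily K 𝒟
  refine ⟨G, hG𝒟, hG, ?_⟩
  have hshadow : ∀ Q ∈ 𝒟.shadow \ G.shadow, Q ⊆ Y ∧ Q.card = k := fun Q hQ => by
    obtain ⟨D, hD, x, hx, rfl⟩ := mem_shadow_iff.1 (mem_sdiff.1 hQ).1
    obtain ⟨hDY, hDk⟩ := mem_powersetCard.1 (h𝒟 hD)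
    exact ⟨(erase_subset x D).trans hDY, by rw [card_erase_of_mem hx, hDk, Nat.add_sub_cancel]⟩
  have hblocked := card_mul_choose_le_of_superset_mem (a := 1) hshadow
    (U := powersetCard (k + 1) Y \ G)
    (fun D hD => (mem_powersetCard.1 (mem_sdiff.1 hD).1).2) fun Q hQ D hDY hDk hQD =>
      mem_sdiff.2 ⟨mem_powersetCard.2 ⟨hDY, hDk⟩, fun hDG => (mem_sdiff.1 hQ).2 <|
        mem_shadow_iff_exists_mem_card_add_one.2 ⟨D, hDG, hQD, by rw [hDk, (hshadow Q hQ).2]⟩⟩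
  rw [Nat.choose_one_right, Nat.choose_succ_self_right] at hblocked
  have hhalf : 2 * (K * (𝒟.shadow \ G.shadow).card) ≤ (powersetCard (k + 1) Y \ G).card := by
    refine Nat.le_of_mul_le_mul_right ?_ k.succ_pos
    calc 2 * (K * (𝒟.shadow \ G.shadow).card) * (k + 1)
        = (𝒟.shadow \ G.shadow).card * (2 * K * (k + 1)) := by ring
      _ ≤ (𝒟.shadow \ G.shadow).card * (Y.card - k) := Nat.mul_le_mul_left _ (by omega)
      _ ≤ (powersetCard (k + 1) Y \ G).card * (k + 1) := hblocked
  have hsplit : (powersetCard (k + 1) Y \ G).card =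
      (powersetCard (k + 1) Y \ 𝒟).card + (𝒟 \ G).card := by
    rw [card_sdiff_of_subset (hG𝒟.trans h𝒟), card_sdiff_of_subset h𝒟, card_sdiff_of_subset hG𝒟]
    have := card_le_card hG𝒟
    have := card_le_card h𝒟
    omega
  omega

/-- The pairs in `Y` that are contained in no member of `G`. -/
def uncoveredPairs (G : Finset (Finset β)) (Y : Finset β) : Finset (Finset β) :=
  (powersetCard 2 Y).filter fun P => ∀ D ∈ G, ¬P ⊆ D

theorem sized_uncoveredPairs (G : Finset (Finset β)) (Y : Finset β) :
    (uncoveredPairs G Y : Set (Finset β)).Sized 2 :=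
  fun _ hP => (mem_powersetCard.1 (mem_filter.1 hP).1).2

theorem exists_mem_of_notMem_uncoveredPairs {P : Finset β} (hPY : P ⊆ Y) (hP : P.card = 2)
    (h : P ∉ uncoveredPairs G Y) : ∃ D ∈ G, P ⊆ D := by
  by_contra! hno
  exact h (mem_filter.2 ⟨mem_powersetCard.2 ⟨hPY, hP⟩, hno⟩)

theorem card_uncoveredPairs_mul_choose_le (G : Finset (Finset β)) (Y : Finset β) (a : ℕ) :
    (uncoveredPairs G Y).card * (Y.card - 2).choose a ≤
      (powersetCard (2 + a) Y \ G).card * (2 + a).choose 2 :=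
  card_mul_choose_le_of_superset_mem (fun _ hP => mem_powersetCard.1 (mem_filter.1 hP).1)
    (fun _ hD => (mem_powersetCard.1 (mem_sdiff.1 hD).1).2) fun _ hP _ hDY hDcard hPD =>
      mem_sdiff.2 ⟨mem_powersetCard.2 ⟨hDY, hDcard⟩, fun hDG => (mem_filter.1 hP).2 _ hDG hPD⟩

end Supersets

section MissingEdges

variable [Fintype β] [DecidableEq β] {F : Finset (Finset β)} {L : Finset β} {r k : ℕ}

theorem card_add_card_missingEdges_add_choose (hF : (F : Set (Finset β)).Sized r)
    (L : Finset β) :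
    (F.filter fun e => ¬Disjoint e L).card + (missingEdges r F L).card +
      (Fintype.card β - L.card).choose r = (Fintype.card β).choose r := by
  have hmeet : (F.filter fun e => ¬Disjoint e L) =
      ((powersetCard r univ).filter fun e => ¬Disjoint e L).filter (· ∈ F) := by
    ext e
    have := @hF e
    simp only [mem_filter, mem_powersetCard_univ]
    grind
  have hmissing : missingEdges r F L =
      ((powersetCard r univ).filter fun e => ¬Disjoint e L).filter (· ∉ F) := by
    rw [missingEdges, filter_filter]
  have hdisjoint : (powersetCard r univ).filter (Disjoint · L) = powersetCard r Lᶜ := by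
    ext e
    rw [mem_filter, mem_powersetCard_univ, mem_powersetCard, ← le_compl_iff_disjoint_right,
      and_comm]
  rw [hmeet, hmissing, card_filter_add_card_filter_not, ← card_compl, ← card_powersetCard,
    ← hdisjoint, add_comm, card_filter_add_card_filter_not, card_powersetCard, card_univ]

theorem card_sdiff_commonLinks_le (F : Finset (Finset β)) (L : Finset β) (k : ℕ) :
    (powersetCard k Lᶜ \ (powersetCard k Lᶜ).filter fun D => ∀ v ∈ L, insert v D ∈ F).card ≤
      (missingEdges (k + 1) F L).card := by
  refine (card_le_card fun D hD => ?_).trans (card_image_le (f := (· \ L)))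
  obtain ⟨hDL, hDF⟩ := mem_sdiff.1 hD
  obtain ⟨v, hv, hvF⟩ : ∃ v ∈ L, insert v D ∉ F := by
    by_contra! hall
    exact hDF (mem_filter.2 ⟨hDL, hall⟩)
  obtain ⟨hDL, hDk⟩ := mem_powersetCard.1 hDL
  have hdisj : Disjoint D L := le_compl_iff_disjoint_right.1 hDL
  refine mem_image.2 ⟨insert v D, mem_filter.2 ⟨mem_powersetCard_univ.2 ?_, fun h => ?_, hvF⟩, ?_⟩
  · rw [card_insert_of_notMem (disjoint_right.1 hdisj hv), hDk]
  · exact disjoint_left.1 h (mem_insert_self v D) hv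
  · rw [insert_sdiff_of_mem D hv, sdiff_eq_self_of_disjoint hdisj]

theorem exists_full_commonLink_card_sdiff_le {K : ℕ} (F : Finset (Finset β))
    (hK : 2 * K * (k + 1) + k ≤ Lᶜ.card) :
    ∃ G ⊆ powersetCard (k + 1) Lᶜ, Full K G ∧ CommonLink F L G ∧
      (powersetCard (k + 1) Lᶜ \ G).card ≤ 2 * (missingEdges (k + 2) F L).card := by
  obtain ⟨G, hG, hfull, hcard⟩ :=
    exists_full_subfamily_of_subset_powersetCard (filter_subset _ _) hK
      (𝒟 := (powersetCard (k + 1) Lᶜ).filter fun D => ∀ v ∈ L, insert v D ∈ F)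
  have hGL : G ⊆ powersetCard (k + 1) Lᶜ := hG.trans (filter_subset _ _)
  refine ⟨G, hGL, hfull, fun D hD v hv => ⟨fun hvD => ?_, (mem_filter.1 (hG hD)).2 v hv⟩,
    hcard.trans (Nat.mul_le_mul_left _ (card_sdiff_commonLinks_le F L (k + 1)))⟩
  exact mem_compl.1 ((mem_powersetCard.1 (hGL hD)).1 hvD) hv

end MissingEdges

theorem exists_full_commonLink (K t k : ℕ) : ∃ C n₀, 0 < C ∧ ∀ n ≥ n₀,
    ∀ (F : Finset (Finset (Fin n))) (L : Finset (Fin n)), L.card = t →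
    ∃ G : Finset (Finset (Fin n)), Full K G ∧ (G : Set (Finset (Fin n))).Sized (k + 3) ∧
      CommonLink F L G ∧
      (uncoveredPairs G Lᶜ).card * n ^ (k + 1) ≤ C * (missingEdges (k + 4) F L).card := by
  refine ⟨2 ^ (k + 1) * (k + 1).factorial * (2 * (k + 3).choose 2),
    2 * (t + 2 + (k + 1)) + 2 * K * (k + 3), ?_, fun n hn F L hL => ?_⟩
  · have : 0 < (k + 3).choose 2 := Nat.choose_pos (by omega)
    positivity
  have hLc : Lᶜ.card = n - t := by rw [card_compl, Fintype.card_fin, hL]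
  obtain ⟨G, hG, hfull, hGL, hcard⟩ := exists_full_commonLink_card_sdiff_le (K := K) (k := k + 2)
    (L := L) F (by rw [hLc, show k + 2 + 1 = k + 3 from rfl]; omega)
  refine ⟨G, hfull, fun D hD => (mem_powersetCard.1 (hG hD)).2, hGL, ?_⟩
  have hpairs := card_uncoveredPairs_mul_choose_le G Lᶜ (k + 1)
  rw [hLc, Nat.sub_sub, show 2 + (k + 1) = k + 3 by ring] at hpairs
  calc (uncoveredPairs G Lᶜ).card * n ^ (k + 1)
      ≤ (uncoveredPairs G Lᶜ).card *
          (2 ^ (k + 1) * (k + 1).factorial * (n - (t + 2)).choose (k + 1)) :=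
        Nat.mul_le_mul_left _ (pow_le_mul_choose_sub (by omega))
    _ = 2 ^ (k + 1) * (k + 1).factorial *
          ((uncoveredPairs G Lᶜ).card * (n - (t + 2)).choose (k + 1)) := by ring
    _ ≤ 2 ^ (k + 1) * (k + 1).factorial *
          (2 * (missingEdges (k + 4) F L).card * (k + 3).choose 2) :=
        Nat.mul_le_mul_left _ (hpairs.trans (Nat.mul_le_mul_right _ hcard))
    _ = _ := by ring

section Cliques

variable [Fintype β] {k q : ℕ} {Γ T : Finset (Finset β)}

theorem mul_card_heavyCliques_le (hΓ : (Γ : Set (Finset β)).Sized 2)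
    (hT : (T : Set (Finset β)).Sized (k + 3))
    (hTΓ : ∀ e ∈ T, ∀ P ⊆ e, P.card = 2 → P ∈ Γ)
    (hheavy : ∀ e ∈ T, ∀ x ∈ e, Fintype.card β ≤ q * hdeg Γ x)
    (hq : q * q * Γ.card ≤ Fintype.card β * Fintype.card β) :
    q * T.card ≤ 2 * Γ.card * Fintype.card β ^ (k + 1) := by
  classical
  set n := Fintype.card β
  set W := univ.filter fun x => n ≤ q * hdeg Γ x
  have hcover : T ⊆ (Γ ×ˢ W ×ˢ powersetCard k univ).image fun z => z.1 ∪ insert z.2.1 z.2.2 := by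
    intro e he
    obtain ⟨P, hPe, hP⟩ := exists_subset_card_eq (show 2 ≤ e.card by rw [hT he]; omega)
    have hrest : (e \ P).card = k + 1 := by rw [card_sdiff_of_subset hPe, hT he, hP]; rfl
    obtain ⟨x, hx⟩ : (e \ P).Nonempty := card_pos.1 (by omega)
    have hxW : x ∈ W := mem_filter.2 ⟨mem_univ x, hheavy e he x (mem_sdiff.1 hx).1⟩
    refine mem_image.2 ⟨(P, x, (e \ P).erase x), mem_product.2 ⟨hTΓ e he P hPe hP, mem_product.2
      ⟨hxW, mem_powersetCard_univ.2 ?_⟩⟩, ?_⟩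
    · rw [card_erase_of_mem hx, hrest, Nat.add_sub_cancel]
    · rw [insert_erase hx, union_sdiff_of_subset hPe]
  have hcard : T.card ≤ Γ.card * (W.card * n ^ k) := by
    refine (card_le_card hcover).trans (card_image_le.trans ?_)
    rw [card_product, card_product]
    gcongr
    exact card_powersetCard_univ_le_pow k
  rcases T.eq_empty_or_nonempty with rfl | ⟨e, he⟩
  · simp
  obtain ⟨x, -⟩ : e.Nonempty := card_pos.1 (by rw [hT he]; omega)
  refine Nat.le_of_mul_le_mul_right ?_ (Fintype.card_pos_iff.2 ⟨x⟩)
  calc q * T.card * n ≤ q * (Γ.card * (W.card * n ^ k)) * n := by gcongr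
    _ = q * Γ.card * n ^ k * (W.card * n) := by ring
    _ ≤ q * Γ.card * n ^ k * (2 * q * Γ.card) :=
        Nat.mul_le_mul_left _ (card_heavy_mul_le hΓ n q)
    _ = 2 * Γ.card * n ^ k * (q * q * Γ.card) := by ring
    _ ≤ 2 * Γ.card * n ^ k * (n * n) := by gcongr
    _ = 2 * Γ.card * n ^ (k + 1) * n := by ring

theorem mul_card_cliques_le (hΓ : (Γ : Set (Finset β)).Sized 2)
    (hT : (T : Set (Finset β)).Sized (k + 3))
    (hTΓ : ∀ e ∈ T, ∀ P ⊆ e, P.card = 2 → P ∈ Γ)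
    (hq : q * q * Γ.card ≤ Fintype.card β * Fintype.card β) :
    q * T.card ≤ 4 * Γ.card * Fintype.card β ^ (k + 1) := by
  classical
  set n := Fintype.card β
  have hlight : q * (T.filter fun e => ∃ x ∈ e, q * hdeg Γ x < n).card ≤
      2 * Γ.card * n ^ (k + 1) := by
    refine mul_card_lightStar_le hΓ (hT.mono (filter_subset _ _)) fun e he => ?_
    obtain ⟨heT, x, hx, hlow⟩ := mem_filter.1 he
    exact ⟨x, hlow, hx, fun y hy hyx => hTΓ e heT _
      (insert_subset hx (singleton_subset_iff.2 hy)) (card_pair hyx.symm)⟩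
  have hheavy : q * (T.filter fun e => ¬∃ x ∈ e, q * hdeg Γ x < n).card ≤
      2 * Γ.card * n ^ (k + 1) :=
    mul_card_heavyCliques_le hΓ (hT.mono (filter_subset _ _))
      (fun e he => hTΓ e (mem_filter.1 he).1)
      (fun e he x hx => not_lt.1 fun hlow => (mem_filter.1 he).2 ⟨x, hx, hlow⟩) hq
  rw [← card_filter_add_card_filter_not (s := T) fun e => ∃ x ∈ e, q * hdeg Γ x < n, mul_add]
  linarith

theorem card_cliques_le [DecidableEq β] {K C M : ℕ} (hC : 0 < C)
    (hΓ : (Γ : Set (Finset β)).Sized 2)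
    (hT : (T : Set (Finset β)).Sized (k + 4)) (hTΓ : ∀ e ∈ T, ∀ P ⊆ e, P.card = 2 → P ∈ Γ)
    (hfull : ∀ T' ⊆ T, Full K T' → T' = ∅)
    (hΓM : Γ.card * Fintype.card β ^ (k + 1) ≤ C * M)
    (hM : 4 * K * C * (4 * K * C) * C * M ≤ Fintype.card β ^ (k + 3)) : T.card ≤ M := by
  set n := Fintype.card β
  set q := 4 * K * C
  rcases T.eq_empty_or_nonempty with rfl | ⟨e, he⟩
  · simp
  obtain ⟨x, -⟩ : e.Nonempty := card_pos.1 (by rw [hT he]; omega)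
  have hn : 0 < n := Fintype.card_pos_iff.2 ⟨x⟩
  have hq : q * q * Γ.card ≤ n * n := by
    refine Nat.le_of_mul_le_mul_right ?_ (show 0 < n ^ (k + 1) by positivity)
    calc q * q * Γ.card * n ^ (k + 1) = q * q * (Γ.card * n ^ (k + 1)) := by ring
      _ ≤ q * q * (C * M) := by gcongr
      _ = q * q * C * M := by ring
      _ ≤ n ^ (k + 3) := hM
      _ = n * n * n ^ (k + 1) := by ring
  have hshadow : q * T.shadow.card ≤ 4 * Γ.card * n ^ (k + 1) := by
    refine mul_card_cliques_le hΓ hT.shadow (fun e he P hPe hP => ?_) hq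
    obtain ⟨D, hD, x, -, rfl⟩ := mem_shadow_iff.1 he
    exact hTΓ D hD P (hPe.trans (erase_subset x D)) hP
  refine Nat.le_of_mul_le_mul_left ?_ (show 0 < 4 * C by omega)
  calc 4 * C * T.card ≤ 4 * C * (K * T.shadow.card) := by
        gcongr; exact Full.card_le_mul_card_shadow hfull
    _ = q * T.shadow.card := by ring
    _ ≤ 4 * (Γ.card * n ^ (k + 1)) := by rw [← mul_assoc]; exact hshadow
    _ ≤ 4 * (C * M) := by gcongr
    _ = 4 * C * M := by ring

end Cliques

namespace StarAttachment

variable [DecidableEq α] {r t p : ℕ} {H : Finset (Finset α)} {S A : Finset α} {w : α}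

theorem card_le_exNum_linearStar [Fintype β] [DecidableEq β] {F F' G : Finset (Finset β)}
    {L : Finset β} {K : ℕ} (h : StarAttachment r t H S A w) (hp : (H.filter (w ∈ ·)).card = p)
    (hF : (F : Set (Finset β)).Sized r) (hfree : ¬ContainsCopy F H) (hG : Full K G)
    (hGr : (G : Set (Finset β)).Sized (r - 1)) (hL : L.card = t) (hGL : CommonLink F L G)
    (hK : t + 2 * (hverts H).card ≤ K) (hF'F : F' ⊆ F) (hF'L : ∀ e ∈ F', Disjoint e L)
    (hpair : ∀ e ∈ F', ∃ P ⊆ e, P.card = 2 ∧ P ∉ uncoveredPairs G Lᶜ) :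
    F'.card ≤ exNum (Fintype.card β - t) r (linearStar r p) := by
  have hF'Y : ∀ e ∈ F', e ⊆ Lᶜ := fun e he => le_compl_iff_disjoint_right.2 (hF'L e he)
  rw [← hL, ← card_compl]
  refine card_le_exNum_of_subset (hF.mono hF'F) hF'Y ?_
  refine h.not_containsCopy_linearStar hp hG hGr hL hGL hK hF'F hF'L (fun e he => ?_) hfree
  obtain ⟨P, hPe, hP, hPΓ⟩ := hpair e he
  exact ⟨P, hPe, hP, exists_mem_of_notMem_uncoveredPairs (hPe.trans (hF'Y e he)) hP hPΓ⟩

/-- The edges avoiding `L` either contain a pair covered by a full family of common links of `L`,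
and then span no linear star, or are outnumbered by the missing edges. -/
theorem exists_forall_card_add_choose_le (h : StarAttachment r t H S A w)
    (hp : (H.filter (w ∈ ·)).card = p) :
    ∃ q n₀, ∀ n ≥ n₀, ∀ F : Finset (Finset (Fin n)), (F : Set (Finset (Fin n))).Sized r →
      ¬ContainsCopy F H → ∀ L : Finset (Fin n), L.card = t →
      q * (missingEdges r F L).card ≤ n ^ (r - 1) →
      F.card + (n - t).choose r ≤ n.choose r + exNum (n - t) r (linearStar r p) := by
  obtain ⟨k, rfl⟩ : ∃ k, r = k + 4 := ⟨r - 4, by have := h.four_le; omega⟩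
  set K := t + 2 * (hverts H).card
  obtain ⟨C, n₀, hC, hlink⟩ := exists_full_commonLink K t k
  refine ⟨4 * K * C * (4 * K * C) * C, n₀, fun n hn F hF hfree L hL hM => ?_⟩
  obtain ⟨G, hG, hGk, hGL, hΓM⟩ := hlink n hn F L hL
  set F₀ := F.filter (Disjoint · L)
  set F₁ := F₀.filter fun e => ∀ P ⊆ e, P.card = 2 → P ∈ uncoveredPairs G Lᶜ
  have hF₁F : F₁ ⊆ F := (filter_subset _ _).trans (filter_subset _ _)
  have hcliques : F₁.card ≤ (missingEdges (k + 4) F L).card := by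
    refine card_cliques_le (K := K) hC (sized_uncoveredPairs G Lᶜ) (hF.mono hF₁F)
      (fun e he => (mem_filter.1 he).2) (fun G' hG' hfull => ?_)
      (by rwa [Fintype.card_fin]) (by rwa [Fintype.card_fin])
    by_contra hne
    obtain ⟨D, hD⟩ := nonempty_iff_ne_empty.2 hne
    obtain ⟨B, hB, -⟩ := h.exists_mem
    obtain ⟨f, hf, hfG'⟩ := hfull.containsCopy (h.hypertree B hB) h.sized (by omega) hD
      (hF (hF₁F (hG' hD))) (by omega)
    exact hfree ⟨f, hf, fun B hB => hF₁F (hG' (hfG' B hB))⟩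
  have hcovered := h.card_le_exNum_linearStar (F' := F₀ \ F₁) hp hF hfree hG hGk hL hGL le_rfl
    (sdiff_subset.trans (filter_subset _ _))
    (fun e he => (mem_filter.1 (mem_sdiff.1 he).1).2) fun e he => by
      by_contra! hclique
      exact (mem_sdiff.1 he).2 (mem_filter.2 ⟨(mem_sdiff.1 he).1, hclique⟩)
  have hmeet := card_add_card_missingEdges_add_choose hF L
  rw [Fintype.card_fin] at hcovered hmeet
  rw [hL] at hmeet
  have hsplit : (F₀ \ F₁).card + F₁.card = F₀.card :=
    card_sdiff_add_card_eq_card (filter_subset _ _)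
  have hsplit' : F₀.card + (F.filter fun e => ¬Disjoint e L).card = F.card :=
    card_filter_add_card_filter_not _
  omega

end StarAttachment

/-! ### Tree-defining orderings -/

section TreeOrder

variable [DecidableEq α] {m r t : ℕ} {E : Fin m → Finset α} {S : Finset α} {w : α} {i₀ : Fin m}

theorem isTreeOrder_iff :
    IsTreeOrder E ↔ ∀ i : Fin m, 0 < i.1 → ∃ j < i, ∀ k < i, E i ∩ E k ⊆ E j := by
  refine forall₂_congr fun i _ => exists_congr fun j => and_congr_right fun _ => ?_
  rw [← inf_eq_inter, Finset.sup_inf_distrib_left]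
  simp only [Finset.sup_le_iff, mem_Iio, inf_eq_inter]

theorem IsTreeOrder.isHypertree_zero {m : ℕ} {E : Fin (m + 1) → Finset α} (hE : IsTreeOrder E) :
    IsHypertree (E 0) (univ.image E) := by
  rw [isTreeOrder_iff] at hE
  induction m with
  | zero => simpa [univ_unique] using IsHypertree.root
  | succ m ih =>
    have hlast : univ.image E =
        insert (E (Fin.last (m + 1))) (univ.image fun i : Fin (m + 1) => E i.castSucc) := by
      rw [Fin.univ_castSuccEmb, cons_eq_insert, image_insert, map_eq_image, image_image]
      rfl
    rw [hlast]
    obtain ⟨j, hj, hEj⟩ := hE (Fin.last (m + 1)) (Nat.succ_pos m)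
    refine .insert_edge (ih (E := fun i => E i.castSucc) fun i hi => ?_)
      (mem_image.2 ⟨j.castLT hj, mem_univ _, rfl⟩) ?_
    · obtain ⟨k, hk, hEk⟩ := hE i.castSucc hi
      exact ⟨k.castLT ((Fin.lt_def.1 hk).trans i.2), hk, fun l hl => hEk l.castSucc hl⟩
    · simp only [mem_image, mem_univ, true_and, forall_exists_index, forall_apply_eq_imp_iff]
      exact fun i => hEj i.castSucc i.castSucc_lt_last

theorem IsTreeOrder.isHypertree (hE : IsTreeOrder E) {B : Finset α} (hB : B ∈ univ.image E) :
    IsHypertree B (univ.image E) := by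
  obtain ⟨i, -, rfl⟩ := mem_image.1 hB
  obtain ⟨m, rfl⟩ := Nat.exists_eq_succ_of_ne_zero i.pos.ne'
  exact hE.isHypertree_zero.reroot (mem_image_of_mem E (mem_univ i))

/-- Descend to the parent of the later of the two edges: the parent of an edge avoiding `w` avoids
`w` too, since it contains the cross-cut vertex of that edge, which appears no later than `w`. -/
theorem IsTreeOrder.inter_subset_of_last (hE : IsTreeOrder E) (hS : IsCrossCut (univ.image E) S)
    (hwS : w ∈ S) (hw : w ∈ E i₀) (hfirst : ∀ i < i₀, w ∉ E i)
    (hlast : ∀ v ∈ S, ∃ j ≤ i₀, v ∈ E j) {l k : Fin m} (hl : w ∈ E l) (hk : w ∉ E k) :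
    E l ∩ E k ⊆ E i₀ ∩ (Iio i₀).sup E := by
  have hmem : ∀ i, E i ∈ univ.image E := fun i => mem_image_of_mem E (mem_univ i)
  have hi₀l : i₀ ≤ l := not_lt.1 fun hlt => hfirst l hlt hl
  induction hN : l.1 + k.1 using Nat.strong_induction_on generalizing l k with
  | _ N ih =>
    intro x hx
    obtain ⟨hxl, hxk⟩ := mem_inter.1 hx
    rcases lt_trichotomy k l with hkl | rfl | hlk
    · rcases hi₀l.eq_or_lt with rfl | hlt
      · exact mem_inter.2 ⟨hxl, Finset.mem_sup.2 ⟨k, mem_Iio.2 hkl, hxk⟩⟩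
      · obtain ⟨q, hq, hparent⟩ := isTreeOrder_iff.1 hE l (by omega)
        have hwq : w ∈ E q := hparent i₀ hlt (mem_inter.2 ⟨hl, hw⟩)
        exact ih (q + k) (by omega) hwq hk (not_lt.1 fun h => hfirst q h hwq) rfl
          (mem_inter.2 ⟨hparent k hkl hx, hxk⟩)
    · exact absurd hl hk
    · obtain ⟨q, hq, hparent⟩ := isTreeOrder_iff.1 hE k (by omega)
      obtain ⟨v, hv⟩ := card_pos.1 (hS _ (hmem k) ▸ one_pos)
      obtain ⟨hvk, hvS⟩ := mem_inter.1 hv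
      obtain ⟨j, hj, hvj⟩ := hlast v hvS
      have hvq : v ∈ E q := hparent j (by omega) (mem_inter.2 ⟨hvk, hvj⟩)
      have hwq : w ∉ E q := fun hwq => hk (hS.eq_of_mem (hmem q) hvq hvS hwq hwS ▸ hvk)
      exact ih (l + q) (by omega) hl hwq hi₀l rfl
        (mem_inter.2 ⟨hxl, hparent l hlk (mem_inter.2 ⟨hxk, hxl⟩)⟩)

theorem IsCrossCut.exists_lt_mem_of_last (hS : IsCrossCut (univ.image E) S) (hcard : 1 < S.card)
    (hlast : ∀ v ∈ S, ∃ j ≤ i₀, v ∈ E j) : 0 < i₀.1 := by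
  by_contra hi₀
  have hsub : S ⊆ E i₀ ∩ S := fun v hv => by
    obtain ⟨j, hj, hvj⟩ := hlast v hv
    obtain rfl : j = i₀ := by omega
    exact mem_inter.2 ⟨hvj, hv⟩
  have := card_le_card hsub
  have := hS (E i₀) (mem_image_of_mem E (mem_univ i₀))
  omega

theorem IsTreeOrder.exists_starAttachment (hr : 4 ≤ r) (ht : 0 < t) (hE : IsTreeOrder E)
    (hcard : ∀ i, (E i).card = r) (hred : Reducible (r - 2) (univ.image E))
    (hS : IsCrossCut (univ.image E) S) (hScard : S.card = t + 1) (hwS : w ∈ S)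
    (hw : ∃ i, w ∈ E i) (hlast : ∀ v ∈ S, ∀ i, w ∈ E i → ∃ j ≤ i, v ∈ E j)
    (hstar : ∀ B ∈ univ.image E, ∀ C ∈ univ.image E, w ∈ B → w ∈ C → B ≠ C → B ∩ C = {w}) :
    ∃ A, StarAttachment r t (univ.image E) S A w := by
  have hmem : ∀ i, E i ∈ univ.image E := fun i => mem_image_of_mem E (mem_univ i)
  have hsized : (univ.image E : Set (Finset α)).Sized r := by
    simpa [Set.Sized] using hcard
  obtain ⟨i₀, (hwi₀ : w ∈ E i₀), hmin⟩ := wellFounded_lt.has_min {i | w ∈ E i} hw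
  have hfirst : ∀ i < i₀, w ∉ E i := fun i hi hwi => hmin i hwi hi
  have hlast₀ : ∀ v ∈ S, ∃ j ≤ i₀, v ∈ E j := fun v hv => hlast v hv i₀ hwi₀
  obtain ⟨j₀, hj₀, hparent⟩ := hE i₀ (hS.exists_lt_mem_of_last (by omega) hlast₀)
  have hwj₀ : w ∉ E j₀ := hfirst j₀ hj₀
  obtain ⟨φ, hφ, hφcard⟩ := exists_isCore_card_eq_two hsized (by omega) hred
  have hcore : E i₀ ∩ (Iio i₀).sup E ⊆ φ (E i₀) :=
    (subset_inter inter_subset_left hparent).trans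
      ((hφ _ (hmem i₀)).2 _ (hmem j₀) (ne_of_mem_of_not_mem' hwi₀ hwj₀).symm)
  refine ⟨E i₀ ∩ (Iio i₀).sup E, ⟨hr, fun _ => hE.isHypertree, hsized, hred, hS, hScard, hwS,
    ⟨E i₀, hmem i₀, hwi₀, inter_subset_left⟩, ⟨E j₀, hmem j₀, hwj₀, hparent⟩,
    (card_le_card hcore).trans_eq (hφcard _ (hmem i₀)), fun hdeg => ?_, ?_, hstar⟩⟩
  · obtain ⟨C, hC, hne⟩ := exists_mem_ne hdeg (E i₀)
    obtain ⟨hCH, hwC⟩ := mem_filter.1 hC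
    have hwφ : w ∈ φ (E i₀) := (hφ _ (hmem i₀)).2 C hCH hne (mem_inter.2 ⟨hwi₀, hwC⟩)
    have := card_le_card (insert_subset hwφ hcore)
    rw [card_insert_of_notMem fun hwA => hwj₀ (hparent hwA), hφcard _ (hmem i₀)] at this
    omega
  · simp only [mem_image, mem_univ, true_and, forall_exists_index, forall_apply_eq_imp_iff]
    exact fun l k => hE.inter_subset_of_last hS hwS hwi₀ hfirst hlast₀

end TreeOrder

theorem IsCrossCut.exists_mem_of_card_eq_crossCutNum [DecidableEq α] {H : Finset (Finset α)}
    {S : Finset α} (hS : IsCrossCut H S) (hmin : S.card = crossCutNum H) {w : α} (hw : w ∈ S) :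
    ∃ B ∈ H, w ∈ B := by
  by_contra! hno
  have hS' : IsCrossCut H (S.erase w) := fun B hB => by
    rw [inter_erase, erase_eq_of_notMem fun h => hno B hB (mem_inter.1 h).1, hS B hB]
  have hle : crossCutNum H ≤ (S.erase w).card := Nat.sInf_le ⟨_, hS', rfl⟩
  exact absurd (card_erase_lt_of_mem hw) (by omega)

theorem IsCrossCut.isLinearStar_of_card_eq_one [DecidableEq α] {H : Finset (Finset α)}
    {S : Finset α} {r p : ℕ} {w : α} (hH : (H : Set (Finset α)).Sized r) (hS : IsCrossCut H S)
    (hScard : S.card = 1) (hw : w ∈ S) (hp : (H.filter (w ∈ ·)).card = p)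
    (hstar : ∀ B ∈ H, ∀ C ∈ H, w ∈ B → w ∈ C → B ≠ C → B ∩ C = {w}) : IsLinearStar r p H w := by
  obtain ⟨v, rfl⟩ := card_eq_one.1 hScard
  obtain rfl := mem_singleton.1 hw
  have hmem : ∀ B ∈ H, w ∈ B := fun B hB => by
    obtain ⟨x, hx⟩ := card_pos.1 (hS B hB ▸ one_pos)
    exact mem_singleton.1 (mem_inter.1 hx).2 ▸ (mem_inter.1 hx).1
  rw [filter_true_of_mem hmem] at hp
  exact ⟨hp, hH, hmem, fun B hB C hC => hstar B hB C hC (hmem B hB) (hmem C hC)⟩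

theorem two_tree_expansion_general [DecidableEq α] {r t p m : ℕ} (hr : 4 ≤ r)
    {E : Fin m → Finset α} (hord : IsTreeOrder E) (hcard : ∀ i, (E i).card = r)
    (hred : Reducible (r - 2) (univ.image E)) {S : Finset α} (hS : IsCrossCut (univ.image E) S)
    (hScard : S.card = t + 1) {w : α} (hwS : w ∈ S) (hw : ∃ i, w ∈ E i)
    (hwlast : ∀ v ∈ S, ∀ i, w ∈ E i → ∃ j ≤ i, v ∈ E j)
    (hp : ((univ.image E).filter (w ∈ ·)).card = p)
    (hstar : ∀ B ∈ univ.image E, ∀ C ∈ univ.image E, w ∈ B → w ∈ C → B ≠ C → B ∩ C = {w}) :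
    ∃ n₁ : ℕ, 0 < n₁ ∧ ∀ n, n₁ ≤ n →
      exNum n r (univ.image E) ≤
        n.choose r - (n - t).choose r + exNum (n - t) r (linearStar r p) := by
  rcases t.eq_zero_or_pos with rfl | ht
  · have hH : IsLinearStar r p (univ.image E) w :=
      hS.isLinearStar_of_card_eq_one (by simpa [Set.Sized] using hcard) hScard hwS hp hstar
    refine ⟨1, one_pos, fun n _ => exNum_le fun F hF hfree => ?_⟩
    exact (le_exNum hF fun hcopy => hfree (hH.containsCopy_of_containsCopy_linearStar (by omega)
      hcopy)).trans (Nat.le_add_left _ _)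
  · obtain ⟨A, h⟩ := hord.exists_starAttachment hr ht hcard hred hS hScard hwS hw hwlast hstar
    obtain ⟨q, n₂, hexact⟩ := h.exists_forall_card_add_choose_le hp
    obtain ⟨n₃, hstability⟩ := h.exists_forall_card_missingEdges_le q
    refine ⟨max n₂ n₃ + 1, Nat.succ_pos _, fun n hn => exNum_le fun F hF hfree => ?_⟩
    by_cases hlarge : n.choose r ≤ F.card + (n - t).choose r
    · obtain ⟨L, hL, hmissing⟩ := hstability n (by omega) F hF hfree hlarge
      have := hexact n (by omega) F hF hfree L hL hmissing
      omega
    · omega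

/-- Sharper result on multi-expansions of `2`-trees. If `H` is an `(r-2)`-reducible
`r`-tree with `σ(H) = t+1`, `S` a minimum cross-cut, `w` the last vertex of `S` to be
included in a tree-defining ordering of `H`, and the subgraph `H_w` of edges containing
`w` is a linear star `L^r_p`, then for large `n`,
`ex(n,H) ≤ C(n,r) - C(n-t,r) + ex(n-t, L^r_p)`. -/
theorem two_tree_expansion {α : Type*} [DecidableEq α]
    (r t p m : ℕ) (hr : 4 ≤ r)
    (E : Fin m → Finset α) (hord : IsTreeOrder E) (hcard : ∀ i, (E i).card = r)
    (H : Finset (Finset α)) (hHdef : H = Finset.image E Finset.univ)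
    (hred : Reducible (r - 2) H)
    (hσ : crossCutNum H = t + 1)
    (S : Finset α) (hS : IsCrossCut H S) (hScard : S.card = t + 1)
    (w : α) (hwS : w ∈ S)
    (hwlast : ∀ v ∈ S, ∀ i : Fin m, w ∈ E i → ∃ j : Fin m, j ≤ i ∧ v ∈ E j)
    (hp : (H.filter (fun A => w ∈ A)).card = p)
    (hstar : ∀ A ∈ H.filter (fun A => w ∈ A), ∀ B ∈ H.filter (fun A => w ∈ A),
      A ≠ B → A ∩ B = {w}) :
    ∃ n₁ : ℕ, 0 < n₁ ∧ ∀ n, n₁ ≤ n →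
      exNum n r H ≤
        Nat.choose n r - Nat.choose (n - t) r + exNum (n - t) r (linearStar r p) := by
  subst hHdef
  obtain ⟨B, hB, hwB⟩ := hS.exists_mem_of_card_eq_crossCutNum (hScard.trans hσ.symm) hwS
  obtain ⟨i, -, rfl⟩ := mem_image.1 hB
  exact two_tree_expansion_general hr hord hcard hred hS hScard hwS ⟨i, hwB⟩ hwlast hp
    fun B hB C hC hwB hwC => hstar B (mem_filter.2 ⟨hB, hwB⟩) C (mem_filter.2 ⟨hC, hwC⟩)

end
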